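/- arXiv:2308.08237 — 3 statements merged into one kernel-verified Lean document; each statement's English description precedes it below -/
import Mathlib

section
/- Let T be a tree on n ≥ 3 vertices having exactly p pendant vertices. Then the rank of the matrix Max4PC_T (viewed as a matrix over the rationals) equals 2(n − p). -/
open SimpleGraph

variable {V : Type*}

/-- The maximum of the three four-point sums for vertices `w, x, y, z`:
`max (d w x + d y z) (max (d w y + d x z) (d w z + d x y))`.
This is the entry of the matrix `Max4PC` in row `{w,x}` and column `{y,z}`. -/
noncomputable def max4 (G : SimpleGraph V) (w x y z : V) : ℕ :=
  max (G.dist w x + G.dist y z) (max (G.dist w y + G.dist x z) (G.dist w z + G.dist x y))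

/-- The `Max4PC` entry as a symmetric function of two unordered pairs. -/
noncomputable def max4Sym2 (G : SimpleGraph V) : Sym2 V → Sym2 V → ℕ :=
  Sym2.lift₂ ⟨fun w x y z => max4 G w x y z, by
    intro a₁ a₂ b₁ b₂
    simp only [max4]
    constructor
    · rw [show G.dist a₂ a₁ = G.dist a₁ a₂ from G.dist_comm]
      omega
    · rw [show G.dist b₂ b₁ = G.dist b₁ b₂ from G.dist_comm]
      omega⟩

/-- The matrix `Max4PC_T`, with rows and columns indexed by the 2-element
subsets of the vertex set (non-diagonal elements of `Sym2 V`), over `ℚ`. -/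
noncomputable def max4Matrix [Fintype V] [DecidableEq V] (G : SimpleGraph V) :
    Matrix {s : Sym2 V // ¬ s.IsDiag} {s : Sym2 V // ¬ s.IsDiag} ℚ :=
  fun p q => (max4Sym2 G p.1 q.1 : ℚ)

/-- A rooted parent structure on the tree `G`. -/
structure IsParent (G : SimpleGraph V) (r : V) (f : V → V) : Prop where
  root : f r = r
  adj : ∀ x, x ≠ r → G.Adj x (f x)
  depth : ∀ x, x ≠ r → G.dist r x = G.dist r (f x) + 1
  edge : ∀ x y, G.Adj x y → (x ≠ r ∧ y = f x) ∨ (y ≠ r ∧ x = f y)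

lemma exists_isParent (G : SimpleGraph V) (hT : G.IsTree) (r : V) : ∃ f, IsParent G r f := by
  choose p hp hl using fun x => hT.connected.exists_path_of_dist r x
  have key : ∀ x y, G.Adj x y → G.dist r x = G.dist r y + 1 → y = (p x).penultimate := by
    intro x y hxy hd
    have h1 : ((p y).concat hxy.symm).IsPath := by
      apply Walk.isPath_of_length_eq_dist
      rw [Walk.length_concat, hl, hd]
    have h2 := (hT.isAcyclic.subsingleton_path r x).elim ⟨_, h1⟩ ⟨_, hp x⟩
    have h3 : (p y).concat hxy.symm = p x := congrArg Subtype.val h2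
    rw [← h3]
    simp
  have hr : p r = Walk.nil := by
    have := hl r
    rw [dist_self] at this
    exact Walk.eq_nil_iff_nil.mpr (Walk.length_eq_zero_iff.mp this)
  have hnn : ∀ x, x ≠ r → ¬ (p x).Nil := by
    intro x hx hn
    exact hx hn.eq.symm
  have hadj : ∀ x, x ≠ r → G.Adj x ((p x).penultimate) := by
    intro x hx
    exact ((p x).adj_penultimate (hnn x hx)).symm
  have hdep : ∀ x, x ≠ r → G.dist r x = G.dist r ((p x).penultimate) + 1 := by
    intro x hx
    have h1 := hT.dist_eq_dist_add_one_of_adj r (hadj x hx)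
    rcases h1 with h1 | h1
    · exact h1
    · exfalso
      have h2 : G.dist r (p x).penultimate ≤ (p x).dropLast.length := dist_le _
      have h3 := hl x
      have h4 : (p x).dropLast.length ≤ (p x).length := by
        simp
      omega
  refine ⟨fun x => (p x).penultimate, ?_, hadj, hdep, ?_⟩
  · simp [hr]
  · intro x y hxy
    rcases hT.dist_eq_dist_add_one_of_adj r hxy with h | h
    · left
      refine ⟨?_, key x y hxy h⟩
      rintro rfl
      simp at h
    · right
      refine ⟨?_, key y x hxy.symm h⟩
      rintro rfl
      simp at h

/-- `v` is an ancestor of `x`. -/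
def Anc (f : V → V) (v x : V) : Prop := ∃ k : ℕ, f^[k] x = v

lemma Anc.refl (f : V → V) (x : V) : Anc f x x := ⟨0, rfl⟩

lemma Anc.trans {f : V → V} {u v x : V} (h1 : Anc f u v) (h2 : Anc f v x) : Anc f u x := by
  obtain ⟨k, rfl⟩ := h1
  obtain ⟨l, rfl⟩ := h2
  exact ⟨k + l, Function.iterate_add_apply _ _ _ _⟩

lemma Anc.comparable {f : V → V} {u v x : V} (h1 : Anc f u x) (h2 : Anc f v x) :
    Anc f u v ∨ Anc f v u := by
  obtain ⟨k, rfl⟩ := h1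
  obtain ⟨l, rfl⟩ := h2
  rcases le_total k l with h | h
  · right
    refine ⟨l - k, ?_⟩
    rw [← Function.iterate_add_apply, Nat.sub_add_cancel h]
  · left
    refine ⟨k - l, ?_⟩
    rw [← Function.iterate_add_apply, Nat.sub_add_cancel h]

lemma anc_step {f : V → V} (v x : V) : Anc f v x ↔ v = x ∨ Anc f v (f x) := by
  constructor
  · rintro ⟨k, hk⟩
    cases k with
    | zero => left; exact hk.symm
    | succ k => right; exact ⟨k, hk⟩
  · rintro (rfl | ⟨k, hk⟩)
    · exact Anc.refl _ _
    · exact ⟨k + 1, hk⟩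

lemma IsParent.anc_depth {G : SimpleGraph V} {r : V} {f : V → V} (h : IsParent G r f)
    {v x : V} (ha : Anc f v x) : v = x ∨ G.dist r v < G.dist r x := by
  obtain ⟨k, hk⟩ := ha
  induction k generalizing x with
  | zero => left; exact hk.symm
  | succ k ih =>
    by_cases hx : x = r
    · subst hx
      have : f^[k] x = v := by rw [Function.iterate_succ_apply, h.root] at hk; exact hk
      exact ih this
    · have := h.depth x hx
      rcases ih hk with h1 | h1
      · right; rw [h1]; omega
      · right; omega

lemma IsParent.anc_root {G : SimpleGraph V} {r : V} {f : V → V} (hc : G.Connected)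
    (h : IsParent G r f) (x : V) : Anc f r x := by
  generalize hn : G.dist r x = n
  induction n generalizing x with
  | zero =>
    rw [hc.dist_eq_zero_iff] at hn
    subst hn; exact Anc.refl _ _
  | succ n ih =>
    have hx : x ≠ r := by rintro rfl; simp at hn
    have := h.depth x hx
    rw [anc_step]
    right
    exact ih _ (by omega)

open Classical in
/-- Indicator of the ancestor relation. -/
noncomputable def ind (f : V → V) (v x : V) : ℚ := if Anc f v x then 1 else 0

lemma ind_01 (f : V → V) (v x : V) : ind f v x = 0 ∨ ind f v x = 1 := by
  unfold ind; split_ifs <;> simp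

lemma ind_eq_one {f : V → V} {v x : V} : ind f v x = 1 ↔ Anc f v x := by
  unfold ind; split_ifs <;> simp_all

lemma ind_eq_zero {f : V → V} {v x : V} : ind f v x = 0 ↔ ¬ Anc f v x := by
  unfold ind; split_ifs <;> simp_all

lemma IsParent.ind_step [DecidableEq V] {G : SimpleGraph V} {r : V} {f : V → V}
    (h : IsParent G r f) (v x : V) (hx : x ≠ r) :
    ind f v x = (if v = x then 1 else 0) + ind f v (f x) := by
  by_cases hv : v = x
  · subst hv
    have h1 : ind f v v = 1 := ind_eq_one.mpr (Anc.refl _ _)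
    have h2 : ind f v (f v) = 0 := by
      rw [ind_eq_zero]
      intro ha
      have h3 := h.depth v hx
      rcases h.anc_depth ha with h4 | h4
      · rw [← h4] at h3; omega
      · omega
    rw [h1, h2]; simp
  · unfold ind
    rw [anc_step v x]
    by_cases h2 : Anc f v (f x) <;> simp [hv, h2]

/-- the cut distance -/
noncomputable def cutD [Fintype V] (f : V → V) (x y : V) : ℚ :=
  ∑ v, (ind f v x + ind f v y - 2 * (ind f v x * ind f v y))

lemma cutD_self [Fintype V] (f : V → V) (x : V) : cutD f x x = 0 := by
  unfold cutD
  apply Finset.sum_eq_zero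
  intro v _
  rcases ind_01 f v x with h | h <;> rw [h] <;> norm_num

lemma cutD_comm [Fintype V] (f : V → V) (x y : V) : cutD f x y = cutD f y x := by
  unfold cutD
  apply Finset.sum_congr rfl
  intro v _
  ring

lemma cutD_triangle [Fintype V] (f : V → V) (x y z : V) :
    cutD f x z ≤ cutD f x y + cutD f y z := by
  unfold cutD
  rw [← Finset.sum_add_distrib]
  apply Finset.sum_le_sum
  intro v _
  rcases ind_01 f v x with h | h <;> rcases ind_01 f v y with h' | h' <;>
    rcases ind_01 f v z with h'' | h'' <;> rw [h, h', h''] <;> norm_num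

lemma IsParent.cutD_step [Fintype V] [DecidableEq V] {G : SimpleGraph V} {r : V} {f : V → V}
    (h : IsParent G r f) (x y : V) (hx : x ≠ r) (hxy : ¬ Anc f x y) :
    cutD f x y = cutD f (f x) y + 1 := by
  have : cutD f x y = cutD f (f x) y + ∑ v, (if v = x then (1 : ℚ) else 0) := by
    unfold cutD
    rw [← Finset.sum_add_distrib]
    apply Finset.sum_congr rfl
    intro v _
    rw [h.ind_step v x hx]
    by_cases hv : v = x
    · subst hv
      rw [ind_eq_zero.mpr hxy]
      ring
    · simp [hv]
  rw [this]; simp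

lemma IsParent.cutD_parent [Fintype V] [DecidableEq V] {G : SimpleGraph V} {r : V} {f : V → V}
    (h : IsParent G r f) (x : V) (hx : x ≠ r) : cutD f x (f x) = 1 := by
  rw [h.cutD_step x (f x) hx, cutD_self, zero_add]
  have := h.ind_step x x hx
  rw [ind_eq_one.mpr (Anc.refl _ _)] at this
  simp at this
  exact ind_eq_zero.mp this

lemma IsParent.cutD_le [Fintype V] [DecidableEq V] {G : SimpleGraph V} {r : V} {f : V → V}
    (h : IsParent G r f) {x y : V} (p : G.Walk x y) : cutD f x y ≤ p.length := by
  induction p with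
  | nil => simp [cutD_self]
  | @cons u v w huv p ih =>
    have h1 : cutD f u v = 1 := by
      rcases h.edge u v huv with ⟨h2, rfl⟩ | ⟨h2, rfl⟩
      · exact h.cutD_parent _ h2
      · rw [cutD_comm]; exact h.cutD_parent _ h2
    have := cutD_triangle f u v w
    rw [Walk.length_cons]
    push_cast
    linarith

lemma IsParent.le_cutD [Fintype V] [DecidableEq V] {G : SimpleGraph V} {r : V} {f : V → V}
    (hc : G.Connected) (h : IsParent G r f) (n : ℕ) :
    ∀ x y : V, G.dist r x + G.dist r y = n → (G.dist x y : ℚ) ≤ cutD f x y := by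
  induction n using Nat.strong_induction_on with
  | _ n ih =>
    have main : ∀ x y : V, G.dist r x + G.dist r y = n → G.dist r y ≤ G.dist r x →
        (G.dist x y : ℚ) ≤ cutD f x y := by
      intro x y hn hle
      by_cases hxy : x = y
      · subst hxy; simp [cutD_self]
      have hx : x ≠ r := by
        rintro rfl
        rw [dist_self] at hle
        exact hxy (hc.dist_eq_zero_iff.mp (by omega))
      have hna : ¬ Anc f x y := by
        intro ha
        rcases h.anc_depth ha with h1 | h1
        · exact hxy h1
        · omega
      rw [h.cutD_step x y hx hna]
      have h1 := h.depth x hx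
      have h2 := ih (G.dist r (f x) + G.dist r y) (by omega) (f x) y rfl
      have h3 : G.dist x y ≤ G.dist x (f x) + G.dist (f x) y := hc.dist_triangle
      rw [dist_eq_one_iff_adj.mpr (h.adj x hx)] at h3
      have h4 : (G.dist x y : ℚ) ≤ 1 + G.dist (f x) y := by exact_mod_cast h3
      linarith
    intro x y hn
    rcases le_total (G.dist r y) (G.dist r x) with hle | hle
    · exact main x y hn hle
    · rw [dist_comm, cutD_comm]
      exact main y x (by omega) hle

lemma IsParent.dist_eq [Fintype V] [DecidableEq V] {G : SimpleGraph V} {r : V} {f : V → V}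
    (hc : G.Connected) (h : IsParent G r f) (x y : V) : (G.dist x y : ℚ) = cutD f x y := by
  apply le_antisymm (h.le_cutD hc _ x y rfl)
  obtain ⟨p, hp⟩ := hc.exists_walk_length_eq_dist x y
  rw [← hp]
  exact h.cutD_le p

/-- The contribution of one cut to the maximum. -/
def cutF (a b c d : ℚ) : ℚ :=
  1 - (a + b - 1) * (c + d - 1) + (a + b - 2 * (a * b)) * (c + d - 2 * (c * d))

lemma cutF_ge (a b c d : ℚ) (ha : a = 0 ∨ a = 1) (hb : b = 0 ∨ b = 1) (hc : c = 0 ∨ c = 1)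
    (hd : d = 0 ∨ d = 1) :
    (a + b - 2 * (a * b)) + (c + d - 2 * (c * d)) ≤ cutF a b c d ∧
    (a + c - 2 * (a * c)) + (b + d - 2 * (b * d)) ≤ cutF a b c d ∧
    (a + d - 2 * (a * d)) + (b + c - 2 * (b * c)) ≤ cutF a b c d ∧
    (¬ (a = b ∧ c = d ∧ a ≠ c) → (a + b - 2 * (a * b)) + (c + d - 2 * (c * d)) = cutF a b c d) ∧
    (¬ (a = c ∧ b = d ∧ a ≠ b) → (a + c - 2 * (a * c)) + (b + d - 2 * (b * d)) = cutF a b c d) := by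
  unfold cutF
  rcases ha with rfl | rfl <;> rcases hb with rfl | rfl <;> rcases hc with rfl | rfl <;>
    rcases hd with rfl | rfl <;> norm_num

/-- Two cuts cannot cross. -/
lemma no_cross {f : V → V} {u v : V} {w x y z : V}
    (h1 : ind f u w = ind f u x) (h2 : ind f u y = ind f u z) (h3 : ind f u w ≠ ind f u y)
    (h4 : ind f v w = ind f v y) (h5 : ind f v x = ind f v z) (h6 : ind f v w ≠ ind f v x) :
    False := by
  have key : ∀ s, ind f u s = 1 → ind f v s = 1 →
      (∀ t, ind f v t = 1 → ind f u t = 1) ∨ (∀ t, ind f u t = 1 → ind f v t = 1) := by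
    intro s hs1 hs2
    rw [ind_eq_one] at hs1 hs2
    simp only [ind_eq_one]
    rcases hs1.comparable hs2 with h | h
    · left; intro t ht; exact h.trans ht
    · right; intro t ht; exact h.trans ht
  have kw := key w
  have kx := key x
  have ky := key y
  have kz := key z
  clear key
  rcases ind_01 f u w with a | a <;> rcases ind_01 f u x with b | b <;>
  rcases ind_01 f u y with c | c <;> rcases ind_01 f u z with d | d <;>
  rcases ind_01 f v w with a' | a' <;> rcases ind_01 f v x with b' | b' <;>
  rcases ind_01 f v y with c' | c' <;> rcases ind_01 f v z with d' | d' <;>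
  grind

lemma IsParent.max4_eq [Fintype V] [DecidableEq V] {G : SimpleGraph V} {r : V} {f : V → V}
    (hc : G.Connected) (h : IsParent G r f) (w x y z : V) :
    (max4 G w x y z : ℚ) = ∑ v, cutF (ind f v w) (ind f v x) (ind f v y) (ind f v z) := by
  have hF := fun v => cutF_ge (ind f v w) (ind f v x) (ind f v y) (ind f v z)
    (ind_01 _ _ _) (ind_01 _ _ _) (ind_01 _ _ _) (ind_01 _ _ _)
  unfold max4
  push_cast
  simp only [h.dist_eq hc]
  unfold cutD
  simp only [← Finset.sum_add_distrib]
  apply le_antisymm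
  · refine max_le ?_ (max_le ?_ ?_) <;> apply Finset.sum_le_sum <;> intro v _
    · exact (hF v).1
    · exact (hF v).2.1
    · exact (hF v).2.2.1
  · by_cases hs : ∃ u, ind f u w = ind f u x ∧ ind f u y = ind f u z ∧ ind f u w ≠ ind f u y
    · obtain ⟨u, h1, h2, h3⟩ := hs
      refine le_trans (le_of_eq ?_) (le_trans (le_max_left _ _) (le_max_right _ _))
      apply Finset.sum_congr rfl
      intro v _
      refine ((hF v).2.2.2.2 ?_).symm
      rintro ⟨h4, h5, h6⟩
      exact no_cross h1 h2 h3 h4 h5 h6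
    · refine le_trans (le_of_eq ?_) (le_max_left _ _)
      apply Finset.sum_congr rfl
      intro v _
      refine ((hF v).2.2.2.1 ?_).symm
      rintro ⟨h4, h5, h6⟩
      exact hs ⟨v, h4, h5, h6⟩

lemma exists_other_adj [Fintype V] (G : SimpleGraph V) [DecidableRel G.Adj] {v u : V}
    (hv : G.degree v ≠ 1) (hu : G.Adj v u) : ∃ t, t ≠ u ∧ G.Adj v t := by
  by_contra hcon
  push Not at hcon
  apply hv
  rw [degree_eq_one_iff_existsUnique_adj]
  refine ⟨u, hu, ?_⟩
  intro t ht
  by_contra h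
  exact hcon t h ht

lemma IsParent.leaf_no_child [Fintype V] {G : SimpleGraph V} [DecidableRel G.Adj] {r : V}
    {f : V → V} (h : IsParent G r f) {v : V} (hv : G.degree v = 1) (hr : v ≠ r) (c : V)
    (hc : c ≠ r) : f c ≠ v := by
  rintro rfl
  rw [degree_eq_one_iff_existsUnique_adj] at hv
  have h1 : c = f (f c) := hv.unique (h.adj c hc).symm (h.adj _ hr)
  have h2 := h.depth c hc
  have h3 := h.depth _ hr
  rw [← h1] at h3
  omega

lemma IsParent.leaf_ind [Fintype V] [DecidableEq V] {G : SimpleGraph V} [DecidableRel G.Adj]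
    {r : V} {f : V → V} (h : IsParent G r f) {v : V} (hv : G.degree v = 1) (hr : v ≠ r) (x : V) :
    ind f v x = if v = x then 1 else 0 := by
  by_cases hvx : v = x
  · subst hvx
    simp [ind_eq_one.mpr (Anc.refl _ _)]
  · simp only [hvx, if_false]
    rw [ind_eq_zero]
    rintro ⟨k, hk⟩
    cases k with
    | zero => exact hvx hk.symm
    | succ k =>
      rw [Function.iterate_succ_apply'] at hk
      by_cases hc : f^[k] x = r
      · rw [hc, h.root] at hk; exact hr hk.symm
      · exact h.leaf_no_child hv hr _ hc hk

/-- The number of leaves below `x`. -/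
noncomputable def leafCount [Fintype V] (G : SimpleGraph V) [DecidableRel G.Adj] (f : V → V)
    (x : V) : ℚ := ∑ w ∈ Finset.univ.filter (fun v => G.degree v = 1), ind f w x

lemma IsParent.leafCount_eq [Fintype V] [DecidableEq V] {G : SimpleGraph V} [DecidableRel G.Adj]
    {r : V} {f : V → V} (h : IsParent G r f) (hr : G.degree r ≠ 1) (x : V) :
    leafCount G f x = if G.degree x = 1 then 1 else 0 := by
  unfold leafCount
  have : ∀ w ∈ Finset.univ.filter (fun v => G.degree v = 1),
      ind f w x = if w = x then 1 else 0 := by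
    intro w hw
    rw [Finset.mem_filter] at hw
    exact h.leaf_ind hw.2 (by rintro rfl; exact hr hw.2) x
  rw [Finset.sum_congr rfl this, Finset.sum_ite_eq']
  simp

/-- Linear independence of the `2(n-p)` functions. -/
lemma IsParent.indep [Fintype V] [DecidableEq V] {G : SimpleGraph V} [DecidableRel G.Adj]
    (hT : G.IsTree) {r : V} {f : V → V} (h : IsParent G r f) (hr : G.degree r ≠ 1)
    (hn3 : 3 ≤ Fintype.card V) (κ : ℚ) (a b : {v : V // G.degree v ≠ 1} → ℚ)
    (H : ∀ x y : V, x ≠ y →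
      ∑ v : {v : V // G.degree v ≠ 1},
        (if v.1 = r then 1 else ind f v.1 x + ind f v.1 y - 1) * a v +
      ∑ v : {v : V // G.degree v ≠ 1},
        (if v.1 = r then leafCount G f x + leafCount G f y + κ else
          ind f v.1 x + ind f v.1 y - 2 * (ind f v.1 x * ind f v.1 y)) * b v = 0) :
    a = 0 ∧ b = 0 := by
  obtain ⟨hh, hhdef⟩ : ∃ hh : V → ℚ, hh = fun x =>
    ∑ v : {v : V // G.degree v ≠ 1}, (if v.1 = r then 1 / 2 else ind f v.1 x - 1 / 2) * a v +
    ∑ v : {v : V // G.degree v ≠ 1},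
      (if v.1 = r then leafCount G f x + κ / 2 else ind f v.1 x) * b v := ⟨_, rfl⟩
  have H1 : ∀ x y : V, x ≠ y → hh x + hh y -
      2 * ∑ v : {v : V // G.degree v ≠ 1},
        (if v.1 = r then 0 else b v) * (ind f v.1 x * ind f v.1 y) = 0 := by
    intro x y hxy
    refine Eq.trans ?_ (H x y hxy)
    rw [hhdef]
    simp only [Finset.mul_sum, ← Finset.sum_add_distrib, ← Finset.sum_sub_distrib]
    apply Finset.sum_congr rfl
    intro v _
    split_ifs <;> ring
  have hb : ∀ v : {v : V // G.degree v ≠ 1}, v.1 ≠ r → b v = 0 := by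
    intro v hv
    have hvp := h.adj v.1 hv
    obtain ⟨t, ht, hvt⟩ := exists_other_adj G v.2 hvp
    have htv : t ≠ r ∧ v.1 = f t := by
      rcases h.edge _ _ hvt with h1 | h1
      · exact absurd h1.2 ht
      · exact h1
    have hpd : G.degree (f v.1) ≠ 1 := by
      intro hd
      by_cases hpr : f v.1 = r
      · rw [hpr] at hd; exact hr hd
      · exact h.leaf_no_child hd hpr v.1 hv rfl
    obtain ⟨s, hs, hps⟩ := exists_other_adj G hpd hvp.symm
    have hdv := h.depth v.1 hv
    have hdt := h.depth t htv.1
    rw [← htv.2] at hdt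
    have hvs : ind f v.1 s = 0 := by
      rw [ind_eq_zero]
      intro ha
      rcases h.anc_depth ha with h1 | h1
      · exact hs h1.symm
      · rcases h.edge _ _ hps with ⟨h2, h3⟩ | ⟨h2, h3⟩
        · have := h.depth _ h2
          rw [← h3] at this
          omega
        · have := h.depth _ h2
          rw [← h3] at this
          omega
    have hvt1 : ind f v.1 t = 1 := by
      rw [ind_eq_one, anc_step]
      right
      rw [← htv.2]
      exact Anc.refl _ _
    have htp : t ≠ f v.1 := ht
    have E1 := H1 t (f v.1) ht
    have E2 := H1 v.1 s hs.symm
    have E3 := H1 t v.1 hvt.ne.symm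
    have E4 := H1 (f v.1) s hps.ne
    have E5 : ∑ w : {v : V // G.degree v ≠ 1}, (if w.1 = r then 0 else b w) *
        ((ind f w.1 t - ind f w.1 s) * (ind f w.1 v.1 - ind f w.1 (f v.1))) = 0 := by
      have : ∑ w : {v : V // G.degree v ≠ 1}, (if w.1 = r then 0 else b w) *
        ((ind f w.1 t - ind f w.1 s) * (ind f w.1 v.1 - ind f w.1 (f v.1))) =
        ∑ w : {v : V // G.degree v ≠ 1}, (if w.1 = r then 0 else b w) *
          (ind f w.1 t * ind f w.1 v.1) +
        ∑ w : {v : V // G.degree v ≠ 1}, (if w.1 = r then 0 else b w) *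
          (ind f w.1 (f v.1) * ind f w.1 s) -
        ∑ w : {v : V // G.degree v ≠ 1}, (if w.1 = r then 0 else b w) *
          (ind f w.1 t * ind f w.1 (f v.1)) -
        ∑ w : {v : V // G.degree v ≠ 1}, (if w.1 = r then 0 else b w) *
          (ind f w.1 v.1 * ind f w.1 s) := by
        simp only [← Finset.sum_add_distrib, ← Finset.sum_sub_distrib]
        apply Finset.sum_congr rfl
        intro w _
        ring
      rw [this]
      linarith
    rw [Finset.sum_eq_single v] at E5
    · rw [h.ind_step v.1 v.1 hv, hvs, hvt1] at E5
      simpa [hv] using E5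
    · intro w _ hw
      have hw' : w.1 ≠ v.1 := fun e => hw (Subtype.ext e)
      rw [h.ind_step w.1 v.1 hv]
      simp [hw']
    · simp
  have H2 : ∀ x y : V, x ≠ y → hh x + hh y = 0 := by
    intro x y hxy
    have h1 := H1 x y hxy
    rw [Finset.sum_eq_zero] at h1
    · linarith
    · intro v _
      split_ifs with hv
      · simp
      · simp [hb v hv]
  have H3 : ∀ x, hh x = 0 := by
    intro x
    obtain ⟨y, hy, z, hz, hyz⟩ : ∃ y, y ≠ x ∧ ∃ z, z ≠ x ∧ y ≠ z := by
      have hc : 1 < (Finset.univ.erase x).card := by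
        rw [Finset.card_erase_of_mem (Finset.mem_univ _), Finset.card_univ]; omega
      obtain ⟨y, hy, z, hz, hyz⟩ := Finset.one_lt_card.mp hc
      exact ⟨y, Finset.ne_of_mem_erase hy, z, Finset.ne_of_mem_erase hz, hyz⟩
    have h1 := H2 x y hy.symm
    have h2 := H2 x z hz.symm
    have h3 := H2 y z hyz
    linarith
  have hbr : ∀ x, ∑ v : {v : V // G.degree v ≠ 1},
      (if v.1 = r then leafCount G f x + κ / 2 else ind f v.1 x) * b v =
      (leafCount G f x + κ / 2) * b ⟨r, hr⟩ := by
    intro x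
    rw [Finset.sum_eq_single ⟨r, hr⟩]
    · simp
    · intro w _ hw
      rw [hb w (fun e => hw (Subtype.ext e)), mul_zero]
    · simp
  have ha : ∀ v : {v : V // G.degree v ≠ 1}, v.1 ≠ r → a v = 0 := by
    intro v hv
    have hpd : G.degree (f v.1) ≠ 1 := by
      intro hd
      by_cases hpr : f v.1 = r
      · rw [hpr] at hd; exact hr hd
      · exact h.leaf_no_child hd hpr v.1 hv rfl
    have h1 := H3 v.1
    have h2 := H3 (f v.1)
    rw [hhdef] at h1 h2
    simp only [hbr] at h1 h2
    simp only [h.leafCount_eq hr, hpd, v.2, if_false] at h1 h2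
    have h3 : ∑ w : {v : V // G.degree v ≠ 1},
      ((if w.1 = r then 1 / 2 else ind f w.1 v.1 - 1 / 2) * a w -
      (if w.1 = r then 1 / 2 else ind f w.1 (f v.1) - 1 / 2) * a w) = 0 := by
      rw [Finset.sum_sub_distrib]
      linarith
    rw [Finset.sum_eq_single v] at h3
    · rw [h.ind_step v.1 v.1 hv] at h3
      simp only [hv, if_false, if_true] at h3
      linarith
    · intro w _ hw
      have hw' : w.1 ≠ v.1 := fun e => hw (Subtype.ext e)
      rw [h.ind_step w.1 v.1 hv]
      simp [hw']
    · simp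
  have har : ∀ x, ∑ v : {v : V // G.degree v ≠ 1},
      (if v.1 = r then 1 / 2 else ind f v.1 x - 1 / 2) * a v = 1 / 2 * a ⟨r, hr⟩ := by
    intro x
    rw [Finset.sum_eq_single ⟨r, hr⟩]
    · simp
    · intro w _ hw
      rw [ha w (fun e => hw (Subtype.ext e)), mul_zero]
    · simp
  have : Nontrivial V := Fintype.one_lt_card_iff_nontrivial.mp (by omega)
  obtain ⟨l, hl⟩ := hT.exists_vert_degree_one_of_nontrivial
  have h1 := H3 r
  have h2 := H3 l
  rw [hhdef] at h1 h2
  simp only [har, hbr] at h1 h2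
  simp only [h.leafCount_eq hr, hr, hl, if_false, if_true] at h1 h2
  have hb0 : b ⟨r, hr⟩ = 0 := by linarith
  have ha0 : a ⟨r, hr⟩ = 0 := by rw [hb0] at h1; linarith
  constructor
  · funext v
    by_cases hv : v.1 = r
    · have : v = ⟨r, hr⟩ := Subtype.ext hv
      rw [this]; exact ha0
    · exact ha v hv
  · funext v
    by_cases hv : v.1 = r
    · have : v = ⟨r, hr⟩ := Subtype.ext hv
      rw [this]; exact hb0
    · exact hb v hv

/-- The side function on pairs. -/
noncomputable def pairS (f : V → V) (v : V) : Sym2 V → ℚ :=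
  Sym2.lift ⟨fun x y => ind f v x + ind f v y - 1, by intro x y; ring⟩

/-- The cut function on pairs. -/
noncomputable def pairC (f : V → V) (v : V) : Sym2 V → ℚ :=
  Sym2.lift ⟨fun x y => ind f v x + ind f v y - 2 * (ind f v x * ind f v y), by intro x y; ring⟩

/-- The shifted leaf function on pairs. -/
noncomputable def pairU [Fintype V] (G : SimpleGraph V) [DecidableRel G.Adj] (f : V → V) (κ : ℚ) :
    Sym2 V → ℚ :=
  Sym2.lift ⟨fun x y => leafCount G f x + leafCount G f y + κ, by intro x y; ring⟩

/-- Left factor. -/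
noncomputable def matB [Fintype V] [DecidableEq V] (G : SimpleGraph V) [DecidableRel G.Adj]
    (f : V → V) (r : V) (κ : ℚ) : Matrix {s : Sym2 V // ¬ s.IsDiag}
      ({v : V // G.degree v ≠ 1} ⊕ {v : V // G.degree v ≠ 1}) ℚ :=
  fun P => Sum.elim (fun v => if v.1 = r then 1 else pairS f v.1 P.1)
    (fun v => if v.1 = r then pairU G f κ P.1 else pairC f v.1 P.1)

/-- Right factor. -/
noncomputable def matC [Fintype V] [DecidableEq V] (G : SimpleGraph V) [DecidableRel G.Adj]
    (f : V → V) (r : V) (κ : ℚ) : Matrix {s : Sym2 V // ¬ s.IsDiag}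
      ({v : V // G.degree v ≠ 1} ⊕ {v : V // G.degree v ≠ 1}) ℚ :=
  fun P => Sum.elim (fun v => if v.1 = r then pairU G f κ P.1 else - pairS f v.1 P.1)
    (fun v => if v.1 = r then 1 else pairC f v.1 P.1)

lemma rank_of_injective {m n : Type*} [Fintype m] [Fintype n] [DecidableEq n] (B : Matrix m n ℚ)
    (hB : ∀ x, B.mulVec x = 0 → x = 0) : B.rank = Fintype.card n := by
  unfold Matrix.rank
  rw [LinearMap.finrank_range_of_inj, Module.finrank_fintype_fun_eq_card]
  rw [← LinearMap.ker_eq_bot, LinearMap.ker_eq_bot']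
  exact hB

lemma rank_mul_of_injective {m n : Type*} [Fintype m] [Fintype n] [DecidableEq m] [DecidableEq n]
    (B C : Matrix m n ℚ)
    (hB : ∀ x, B.mulVec x = 0 → x = 0) (hC : ∀ x, C.mulVec x = 0 → x = 0) :
    (B * C.transpose).rank = Fintype.card n := by
  have h1 : (C.transpose).rank = Fintype.card n := by
    rw [Matrix.rank_transpose, rank_of_injective C hC]
  have h2 : LinearMap.range C.transpose.mulVecLin = ⊤ := by
    apply Submodule.eq_top_of_finrank_eq
    rw [Module.finrank_fintype_fun_eq_card]
    exact h1
  rw [← rank_of_injective B hB]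
  unfold Matrix.rank
  rw [Matrix.mulVecLin_mul, LinearMap.range_comp_of_range_eq_top _ h2]

lemma IsParent.factor [Fintype V] [DecidableEq V] {G : SimpleGraph V} [DecidableRel G.Adj]
    (hT : G.IsTree) {r : V} {f : V → V} (h : IsParent G r f) (hr : G.degree r ≠ 1)
    (κ : ℚ) (hκ : 2 * κ = ∑ v : {v : V // G.degree v ≠ 1}, if v.1 = r then 0 else 1) :
    max4Matrix G = matB G f r κ * (matC G f r κ).transpose := by
  ext ⟨P, hP⟩ ⟨Q, hQ⟩
  induction P using Sym2.ind with | _ w x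
  induction Q using Sym2.ind with | _ y z
  have hwx : w ≠ x := by simpa using hP
  have hyz : y ≠ z := by simpa using hQ
  rw [Matrix.mul_apply]
  have e1 : max4Matrix G ⟨s(w, x), hP⟩ ⟨s(y, z), hQ⟩ = (max4 G w x y z : ℚ) := rfl
  rw [e1, h.max4_eq hT.connected, Fintype.sum_sum_type]
  simp only [matB, matC, Matrix.transpose_apply, Sum.elim_inl, Sum.elim_inr, pairS, pairC, pairU,
    Sym2.lift_mk]
  rw [← Finset.sum_add_distrib]
  rw [← Finset.sum_filter_add_sum_filter_not Finset.univ (fun v => G.degree v = 1)]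
  have e2 : ∑ v ∈ Finset.univ.filter (fun v => G.degree v = 1),
      cutF (ind f v w) (ind f v x) (ind f v y) (ind f v z) =
      (leafCount G f w + leafCount G f x) + (leafCount G f y + leafCount G f z) := by
    unfold leafCount
    simp only [← Finset.sum_add_distrib]
    apply Finset.sum_congr rfl
    intro v hv
    rw [Finset.mem_filter] at hv
    have hvr : v ≠ r := by rintro rfl; exact hr hv.2
    have key : ∀ s t : V, s ≠ t → ind f v s * ind f v t = 0 := by
      intro s t hst
      rw [h.leaf_ind hv.2 hvr, h.leaf_ind hv.2 hvr]
      by_cases h1 : v = s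
      · have h2 : v ≠ t := by rintro rfl; exact hst h1.symm
        simp [h2]
      · simp [h1]
    unfold cutF
    rw [key w x hwx, key y z hyz]
    ring
  have e3 : ∑ v ∈ Finset.univ.filter (fun v => ¬ G.degree v = 1),
      cutF (ind f v w) (ind f v x) (ind f v y) (ind f v z) =
      ∑ v : {v : V // G.degree v ≠ 1},
      cutF (ind f v w) (ind f v x) (ind f v y) (ind f v z) := by
    apply Finset.sum_subtype
    simp
  rw [e2, e3]
  have e4 : (leafCount G f w + leafCount G f x) + (leafCount G f y + leafCount G f z) =
      ∑ v : {v : V // G.degree v ≠ 1}, (if v.1 = r then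
        (leafCount G f w + leafCount G f x) + (leafCount G f y + leafCount G f z) + 2 * κ else 0)
        - ∑ v : {v : V // G.degree v ≠ 1}, (if v.1 = r then 0 else 1) := by
    rw [← hκ, Finset.sum_eq_single ⟨r, hr⟩]
    · simp
    · intro v _ hv
      have : v.1 ≠ r := fun e => hv (Subtype.ext e)
      simp [this]
    · simp
  rw [e4, ← Finset.sum_sub_distrib, ← Finset.sum_add_distrib]
  apply Finset.sum_congr rfl
  intro v _
  by_cases hv : v.1 = r
  · have := fun x => ind_eq_one.mpr (h.anc_root hT.connected x)
    simp only [hv, if_true, this, cutF]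
    ring
  · simp only [hv, if_false, cutF]
    ring

lemma IsParent.injB [Fintype V] [DecidableEq V] {G : SimpleGraph V} [DecidableRel G.Adj]
    (hT : G.IsTree) {r : V} {f : V → V} (h : IsParent G r f) (hr : G.degree r ≠ 1)
    (hn3 : 3 ≤ Fintype.card V) (κ : ℚ)
    (c : {v : V // G.degree v ≠ 1} ⊕ {v : V // G.degree v ≠ 1} → ℚ)
    (hc : (matB G f r κ).mulVec c = 0) : c = 0 := by
  have := h.indep hT hr hn3 κ (fun v => c (Sum.inl v)) (fun v => c (Sum.inr v)) (by
    intro x y hxy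
    have h1 := congrFun hc ⟨s(x, y), by simpa using hxy⟩
    simp only [Matrix.mulVec, dotProduct, Fintype.sum_sum_type, matB, Sum.elim_inl, Sum.elim_inr,
      pairS, pairC, pairU, Sym2.lift_mk, Pi.zero_apply] at h1
    exact h1)
  funext i
  rcases i with v | v
  · exact congrFun this.1 v
  · exact congrFun this.2 v

lemma IsParent.injC [Fintype V] [DecidableEq V] {G : SimpleGraph V} [DecidableRel G.Adj]
    (hT : G.IsTree) {r : V} {f : V → V} (h : IsParent G r f) (hr : G.degree r ≠ 1)
    (hn3 : 3 ≤ Fintype.card V) (κ : ℚ)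
    (c : {v : V // G.degree v ≠ 1} ⊕ {v : V // G.degree v ≠ 1} → ℚ)
    (hc : (matC G f r κ).mulVec c = 0) : c = 0 := by
  have := h.indep hT hr hn3 κ
    (fun v => if v.1 = r then c (Sum.inr v) else - c (Sum.inl v))
    (fun v => if v.1 = r then c (Sum.inl v) else c (Sum.inr v)) (by
    intro x y hxy
    have h1 := congrFun hc ⟨s(x, y), by simpa using hxy⟩
    simp only [Matrix.mulVec, dotProduct, Fintype.sum_sum_type, matC, Sum.elim_inl, Sum.elim_inr,
      pairS, pairC, pairU, Sym2.lift_mk, Pi.zero_apply] at h1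
    rw [← h1, ← Finset.sum_add_distrib, ← Finset.sum_add_distrib]
    apply Finset.sum_congr rfl
    intro v _
    split_ifs <;> ring)
  funext i
  rcases i with v | v
  · by_cases hv : v.1 = r
    · simpa [hv] using congrFun this.2 v
    · simpa [hv] using congrFun this.1 v
  · by_cases hv : v.1 = r
    · simpa [hv] using congrFun this.1 v
    · simpa [hv] using congrFun this.2 v

lemma exists_internal [Fintype V] [DecidableEq V] (G : SimpleGraph V) [DecidableRel G.Adj]
    (hT : G.IsTree) (hn3 : 3 ≤ Fintype.card V) : ∃ r, G.degree r ≠ 1 := by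
  by_contra hcon
  push Not at hcon
  have h1 := G.sum_degrees_eq_twice_card_edges
  have h2 := hT.card_edgeFinset
  simp only [hcon, Finset.sum_const, Finset.card_univ, smul_eq_mul, mul_one] at h1
  omega

/-- For a tree `T` on `n ≥ 3` vertices with `p` pendant vertices, the rank of the
matrix `Max4PC_T` over `ℚ` is `2(n - p)`. -/
theorem rank_max4Matrix {V : Type*} [Fintype V] [DecidableEq V] (G : SimpleGraph V)
    [DecidableRel G.Adj] (hT : G.IsTree) (n p : ℕ)
    (hn : Fintype.card V = n) (hn3 : 3 ≤ n)
    (hp : (Finset.univ.filter fun v : V => G.degree v = 1).card = p) :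
    (max4Matrix G).rank = 2 * (n - p) := by
  subst hn
  obtain ⟨r, hr⟩ := exists_internal G hT hn3
  obtain ⟨f, h⟩ := exists_isParent G hT r
  obtain ⟨κ, hκ⟩ : ∃ κ : ℚ, 2 * κ =
      ∑ v : {v : V // G.degree v ≠ 1}, if v.1 = r then 0 else 1 :=
    ⟨(∑ v : {v : V // G.degree v ≠ 1}, if v.1 = r then 0 else 1) / 2, by ring⟩
  rw [h.factor hT hr κ hκ, rank_mul_of_injective _ _ (h.injB hT hr hn3 κ) (h.injC hT hr hn3 κ)]
  have h1 : Fintype.card {v : V // G.degree v ≠ 1} = Fintype.card V - p := by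
    rw [← hp, Fintype.card_subtype_compl, Fintype.card_subtype]
  rw [Fintype.card_sum, h1]
  ring
end

section
/- Let T be a tree on n ≥ 3 vertices with exactly p pendant vertices. Then, viewing Max4PC_T as an integer matrix of size binom(n,2) × binom(n,2), there exist integer matrices U and V of size binom(n,2) × binom(n,2), each invertible over the integers (determinant ±1), such that U · Max4PC_T · V is a diagonal matrix whose multiset of diagonal entries consists of the value 0 with multiplicity binom(n,2) − 2(n − p), the value 1 with multiplicity 2, and the value 2 with multiplicity 2(n − p − 1). That is, the invariant factors of Max4PC_T are 0 (binom(n,2) − 2(n−p) times), 1, 1, and 2 (2(n−p−1) times). -/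
open SimpleGraph

variable {V : Type*}

/-- The matrix `Max4PC_T` as an integer matrix, with rows and columns indexed
by the 2-element subsets of the vertex set (non-diagonal elements of `Sym2 V`). -/
noncomputable def max4MatrixZ [Fintype V] [DecidableEq V] (G : SimpleGraph V) :
    Matrix {s : Sym2 V // ¬ s.IsDiag} {s : Sym2 V // ¬ s.IsDiag} ℤ :=
  fun p q => (max4Sym2 G p.1 q.1 : ℤ)

namespace Max4Aux

open Finset

lemma side_reach {G : SimpleGraph V} (hT : G.IsTree) {u v : V} (x : V) :
    (G.deleteEdges {s(u, v)}).Reachable x u ∨ (G.deleteEdges {s(u, v)}).Reachable x v := by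
  obtain ⟨q⟩ := hT.1.preconnected x u
  induction q with
  | nil => exact Or.inl (Reachable.refl _)
  | @cons a b c hab q ih =>
    by_cases he : s(a, b) = s(c, v)
    · rcases Sym2.eq_iff.1 he with ⟨rfl, rfl⟩ | ⟨rfl, rfl⟩
      · exact Or.inl (Reachable.refl _)
      · exact Or.inr (Reachable.refl _)
    · have : (G.deleteEdges {s(c, v)}).Adj a b := by simp [deleteEdges_adj, hab, he]
      exact ih.imp (this.reachable.trans) (this.reachable.trans)

/-- Any walk between different sides passes through the edge. -/
lemma side_cross {G : SimpleGraph V} (hT : G.IsTree) {u v : V} (huv : G.Adj u v) {x y : V}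
    (hx : (G.deleteEdges {s(u, v)}).Reachable x u) (hy : (G.deleteEdges {s(u, v)}).Reachable y v) :
    G.dist x u + G.dist u y ≤ G.dist x y ∧ G.dist x v + G.dist v y ≤ G.dist x y := by
  classical
  obtain ⟨q, hq⟩ := hT.1.exists_walk_length_eq_dist x y
  have hb : ¬ (G.deleteEdges {s(u, v)}).Reachable u v :=
    isBridge_iff.1 (isAcyclic_iff_forall_adj_isBridge.1 hT.2 huv)
  have hmem : s(u, v) ∈ q.edges := by
    by_contra hcon
    apply hb
    have : (G.deleteEdges {s(u, v)}).Reachable x y := ⟨q.toDeleteEdges {s(u, v)} (by grind)⟩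
    exact hx.symm.trans (this.trans hy)
  have key : ∀ a ∈ q.support, G.dist x a + G.dist a y ≤ G.dist x y := by
    intro a ha
    have h1 := congrArg Walk.length (q.take_spec ha)
    rw [Walk.length_append] at h1
    have h2 := dist_le (q.takeUntil a ha)
    have h3 := dist_le (q.dropUntil a ha)
    omega
  exact ⟨key _ (q.fst_mem_support_of_mem_edges hmem), key _ (q.snd_mem_support_of_mem_edges hmem)⟩

lemma reach_lt {G : SimpleGraph V} (hT : G.IsTree) {u v : V} (huv : G.Adj u v) {x : V}
    (hx : (G.deleteEdges {s(u, v)}).Reachable x u) : G.dist x v = G.dist x u + 1 := by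
  have h1 := (side_cross hT huv hx (Reachable.refl v)).1
  have h2 := hT.1.dist_triangle (u := x) (v := u) (w := v)
  have h3 : G.dist u v = 1 := dist_eq_one_iff_adj.2 huv
  omega

lemma F1 {G : SimpleGraph V} (hT : G.IsTree) {u v : V} (huv : G.Adj u v) (x : V) :
    G.dist x v = G.dist x u + 1 ∨ G.dist x u = G.dist x v + 1 := by
  rcases side_reach hT (u := u) (v := v) x with h | h
  · exact Or.inl (reach_lt hT huv h)
  · exact Or.inr (reach_lt hT huv.symm (by rwa [Sym2.eq_swap]))

lemma F2 {G : SimpleGraph V} (hT : G.IsTree) {u v : V} (huv : G.Adj u v) {x y : V}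
    (hx : G.dist x u < G.dist x v) (hy : G.dist y v < G.dist y u) :
    G.dist x y = G.dist x u + 1 + G.dist y v := by
  have hx' : (G.deleteEdges {s(u, v)}).Reachable x u := by
    rcases side_reach hT (u := u) (v := v) x with h | h
    · exact h
    · have := reach_lt hT huv.symm (x := x) (by rwa [Sym2.eq_swap])
      omega
  have hy' : (G.deleteEdges {s(u, v)}).Reachable y v := by
    rcases side_reach hT (u := u) (v := v) y with h | h
    · have := reach_lt hT huv h
      omega
    · exact h
  have h1 := (side_cross hT huv hx' hy').1
  have h2 := reach_lt hT huv.symm (x := y) (by rwa [Sym2.eq_swap])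
  have h3 := hT.1.dist_triangle (u := x) (v := u) (w := y)
  rw [G.dist_comm (u := u) (v := y)] at *
  omega

/-- Indicator that `x` is on the side of `a` for the edge `ab`. -/
noncomputable def ind (G : SimpleGraph V) (a b x : V) : ℤ :=
  if G.dist x a < G.dist x b then 1 else 0

lemma ind_cases (G : SimpleGraph V) (a b x : V) : ind G a b x = 0 ∨ ind G a b x = 1 := by
  unfold ind; split_ifs <;> simp

lemma ind_symm {G : SimpleGraph V} (hT : G.IsTree) {a b : V} (hab : G.Adj a b) (x : V) :
    ind G b a x = 1 - ind G a b x := by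
  have := F1 hT hab x
  unfold ind
  split_ifs <;> first | rfl | omega

/-- Adjacent vertices are on the same side of any other edge. -/
lemma ind_adj {G : SimpleGraph V} (hT : G.IsTree) {a b : V} (hab : G.Adj a b) {x y : V}
    (hxy : G.Adj x y) (hne : s(a, b) ≠ s(x, y)) : ind G a b x = ind G a b y := by
  have hd : G.dist x y = 1 := dist_eq_one_iff_adj.2 hxy
  have hz : ∀ {p q : V}, G.dist p q = 0 → p = q := fun h => (hT.1.dist_eq_zero_iff).1 h
  have hx := F1 hT hab x
  have hy := F1 hT hab y
  unfold ind
  by_cases h1 : G.dist x a < G.dist x b <;> by_cases h2 : G.dist y a < G.dist y b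
  · simp [h1, h2]
  · exfalso
    have := F2 hT hab h1 (y := y) (by omega)
    apply hne
    rw [hz (p := x) (q := a) (by omega), hz (p := y) (q := b) (by omega)]
  · exfalso
    have := F2 hT hab.symm (x := x) (y := y) (by omega) h2
    apply hne
    rw [hz (p := x) (q := b) (by omega), hz (p := y) (q := a) (by omega), Sym2.eq_swap]
  · simp [h1, h2]

lemma ind_self_left {G : SimpleGraph V} (hT : G.IsTree) {a b : V} (hab : G.Adj a b) :
    ind G a b a = 1 := by
  simp [ind, dist_eq_one_iff_adj.2 hab]

lemma ind_self_right {G : SimpleGraph V} {a b : V} :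
    ind G a b b = 0 := by
  simp [ind]

/-- distance as a sum over darts -/
lemma dist_eq_sum [Fintype V] [DecidableEq V] {G : SimpleGraph V} [DecidableRel G.Adj]
    (hT : G.IsTree) (x y : V) :
    (G.dist x y : ℤ) = ∑ d : G.Dart, ind G d.fst d.snd x * (1 - ind G d.fst d.snd y) := by
  obtain ⟨q⟩ := hT.1.preconnected x y
  induction q with
  | nil =>
    rw [dist_self]
    symm
    apply Finset.sum_eq_zero
    intro d _
    rcases ind_cases G d.fst d.snd _ with h | h <;> rw [h] <;> simp
  | @cons a b c hab q ih =>
    have key : ∑ d : G.Dart, (ind G d.fst d.snd a * (1 - ind G d.fst d.snd c)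
        - ind G d.fst d.snd b * (1 - ind G d.fst d.snd c)) = (G.dist a c : ℤ) - G.dist b c := by
      have hne : (⟨(a, b), hab⟩ : G.Dart) ≠ ⟨(b, a), hab.symm⟩ := by
        intro h
        have := congrArg (fun d : G.Dart => d.fst) h
        exact hab.ne this
      rw [← Finset.sum_subset (Finset.subset_univ
        ({⟨(a, b), hab⟩, ⟨(b, a), hab.symm⟩} : Finset G.Dart))]
      · rw [Finset.sum_pair hne]
        simp only [ind_symm hT hab, ind_self_left hT hab, ind_self_right]
        have := F1 hT hab c
        rw [G.dist_comm (u := a), G.dist_comm (u := b)]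
        unfold ind
        split_ifs <;> simp <;> omega
      · intro d _ hd
        have : ind G d.fst d.snd a = ind G d.fst d.snd b := by
          apply ind_adj hT d.adj hab
          intro h
          apply hd
          rcases Sym2.eq_iff.1 h with ⟨h1, h2⟩ | ⟨h1, h2⟩
          · simp only [Finset.mem_insert, Finset.mem_singleton]
            left; ext <;> assumption
          · simp only [Finset.mem_insert, Finset.mem_singleton]
            right; ext <;> assumption
        rw [this]; ring
    rw [Finset.sum_sub_distrib] at key
    linarith

lemma sum_symm [Fintype V] [DecidableEq V] {G : SimpleGraph V} [DecidableRel G.Adj]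
    (f : G.Dart → ℤ) : ∑ d : G.Dart, f d = ∑ d : G.Dart, f d.symm :=
  (Equiv.sum_comp (Function.Involutive.toPerm Dart.symm Dart.symm_involutive) f).symm

/-- number of edges with split `wx | yz` -/
noncomputable def split [Fintype V] [DecidableEq V] (G : SimpleGraph V) [DecidableRel G.Adj]
    (w x y z : V) : ℤ :=
  ∑ d : G.Dart, ind G d.fst d.snd w * ind G d.fst d.snd x * (ind G d.snd d.fst y * ind G d.snd d.fst z)

lemma dist_diff [Fintype V] [DecidableEq V] {G : SimpleGraph V} [DecidableRel G.Adj]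
    (hT : G.IsTree) (w x y z : V) :
    (G.dist w y + G.dist x z : ℤ) - (G.dist w x + G.dist y z) =
      2 * split G w x y z - 2 * split G w y x z := by
  have e1 : 2 * ((G.dist w y + G.dist x z : ℤ) - (G.dist w x + G.dist y z)) =
     2 * (2 * split G w x y z - 2 * split G w y x z) := by
    rw [two_mul, two_mul (2 * split G w x y z - 2 * split G w y x z)]
    simp only [dist_eq_sum hT, split, Finset.mul_sum, ← Finset.sum_add_distrib,
      ← Finset.sum_sub_distrib]
    conv_lhs => 
      rw [Finset.sum_add_distrib]
      arg 2
      rw [sum_symm]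
    conv_rhs => 
      rw [Finset.sum_add_distrib]
      arg 2
      rw [sum_symm]
    rw [← Finset.sum_add_distrib, ← Finset.sum_add_distrib]
    apply Finset.sum_congr rfl
    intro d _
    simp only [Dart.symm, Prod.fst_swap, Prod.snd_swap, ind_symm hT d.adj]
    rcases ind_cases G d.fst d.snd w with h1 | h1 <;>
    rcases ind_cases G d.fst d.snd x with h2 | h2 <;>
    rcases ind_cases G d.fst d.snd y with h3 | h3 <;>
    rcases ind_cases G d.fst d.snd z with h4 | h4 <;>
    rw [h1, h2, h3, h4] <;> norm_num
  linarith

lemma split_nonneg [Fintype V] [DecidableEq V] {G : SimpleGraph V} [DecidableRel G.Adj]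
    (w x y z : V) : 0 ≤ split G w x y z := by
  have hi : ∀ a b c, 0 ≤ ind G a b c := fun a b c => by
    rcases ind_cases G a b c with h | h <;> rw [h] <;> norm_num
  exact Finset.sum_nonneg fun d _ => mul_nonneg (mul_nonneg (hi ..) (hi ..))
    (mul_nonneg (hi ..) (hi ..))

lemma split_ne [Fintype V] [DecidableEq V] {G : SimpleGraph V} [DecidableRel G.Adj]
    (hT : G.IsTree) {w x y z : V} (h : split G w x y z ≠ 0) :
    G.dist w x + G.dist y z < G.dist w y + G.dist x z := by
  obtain ⟨d, -, hd⟩ := Finset.exists_ne_zero_of_sum_ne_zero h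
  have hi : ∀ {a b c}, ind G a b c ≠ 0 → G.dist c a < G.dist c b := fun {a b c} h => by
    by_contra hcon
    exact h (by simp [ind, hcon])
  have hw := hi (left_ne_zero_of_mul (left_ne_zero_of_mul hd))
  have hx := hi (right_ne_zero_of_mul (left_ne_zero_of_mul hd))
  have hy := hi (left_ne_zero_of_mul (right_ne_zero_of_mul hd))
  have hz := hi (right_ne_zero_of_mul (right_ne_zero_of_mul hd))
  have h1 := F2 hT d.adj hw hy
  have h2 := F2 hT d.adj hx hz
  have h3 := hT.1.dist_triangle (u := w) (v := d.fst) (w := x)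
  have h4 := hT.1.dist_triangle (u := y) (v := d.snd) (w := z)
  rw [G.dist_comm (u := d.fst) (v := x)] at h3
  rw [G.dist_comm (u := d.snd) (v := z)] at h4
  omega

lemma split_swap [Fintype V] [DecidableEq V] {G : SimpleGraph V} [DecidableRel G.Adj]
    (w x y z : V) : split G w x y z = split G w x z y := by
  unfold split
  exact Finset.sum_congr rfl fun d _ => by ring

lemma max4_eq [Fintype V] [DecidableEq V] {G : SimpleGraph V} [DecidableRel G.Adj]
    (hT : G.IsTree) (w x y z : V) :
    (max4 G w x y z : ℤ) = G.dist w x + G.dist y z + 2 * split G w x y z := by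
  have h1 := dist_diff hT w x y z
  have h2 := dist_diff hT w x z y
  rw [split_swap w x z y, G.dist_comm (u := z) (v := y)] at h2
  have n1 := split_nonneg (G := G) w x y z
  have n2 := split_nonneg (G := G) w y x z
  have n3 := split_nonneg (G := G) w z x y
  have c1 : split G w x y z = 0 ∨ split G w y x z = 0 := by
    by_contra hcon
    push Not at hcon
    have := split_ne hT hcon.1
    have := split_ne hT hcon.2
    omega
  have c2 : split G w x y z = 0 ∨ split G w z x y = 0 := by
    by_contra hcon
    push Not at hcon
    have := split_ne hT (split_swap (G := G) w x y z ▸ hcon.1)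
    have := split_ne hT hcon.2
    rw [G.dist_comm (u := z) (v := y)] at *
    omega
  unfold max4
  push_cast
  rcases c1 with c | c
  · omega
  · rcases c2 with c' | c' <;> omega


section LinAlg

variable {S K : Type*} [Fintype S] [DecidableEq S] [Fintype K] [DecidableEq K]

lemma rank_null (f : (S → ℤ) →ₗ[ℤ] (K → ℤ)) (hf : Function.Surjective f) :
    Fintype.card K + Module.finrank ℤ (LinearMap.ker f) = Fintype.card S := by
  have h1 := (LinearMap.ker f).finrank_quotient_add_finrank
  have h2 := (f.quotKerEquivOfSurjective hf).finrank_eq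
  rw [h2, Module.finrank_pi, Module.finrank_pi] at h1
  exact h1

lemma exists_unimodular {F : Type*} [Fintype F] [DecidableEq F] (X : Matrix S K ℤ)
    (hX : Function.Surjective (X.transpose.mulVecLin)) (e : S ≃ F ⊕ K) :
    ∃ P : Matrix S S ℤ, IsUnit P.det ∧
      X.transpose * P = Matrix.of (fun k s => if e s = Sum.inr k then (1 : ℤ) else 0) := by
  set f := X.transpose.mulVecLin with hf
  obtain ⟨g, hg⟩ := Module.projective_lifting_property f LinearMap.id hX
  have hg' : ∀ h, f (g h) = h := fun h => LinearMap.congr_fun hg h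
  have hrk := rank_null f hX
  have hcard := Fintype.card_congr e
  rw [hcard, Fintype.card_sum] at hrk
  have hF : Module.finrank ℤ (LinearMap.ker f) = Fintype.card F := by omega
  let b : Module.Basis F ℤ (LinearMap.ker f) :=
    (Module.finBasis ℤ (LinearMap.ker f)).reindex
      ((finCongr hF).trans (Fintype.equivFin F).symm)
  let φ : (LinearMap.ker f × (K → ℤ)) ≃ₗ[ℤ] (S → ℤ) :=
    LinearEquiv.ofBijective
      ((LinearMap.ker f).subtype.coprod g) (by
        constructor
        · rw [injective_iff_map_eq_zero]
          rintro ⟨k, h⟩ hk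
          simp only [LinearMap.coprod_apply, Submodule.subtype_apply] at hk
          have h1 := congrArg f hk
          rw [map_add, hg', k.2, zero_add, map_zero] at h1
          subst h1
          rw [map_zero, add_zero] at hk
          ext1
          · exact Subtype.ext hk
          · rfl
        · intro y
          refine ⟨(⟨y - g (f y), ?_⟩, f y), ?_⟩
          · rw [LinearMap.mem_ker, map_sub, hg', sub_self]
          · simp)
  have hφ : ∀ q, f (φ q) = q.2 := by
    rintro ⟨k, h⟩
    change f ((k : S → ℤ) + g h) = h
    rw [map_add, hg', k.2, zero_add]
  let ψ : (S → ℤ) ≃ₗ[ℤ] (S → ℤ) :=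
    ((LinearEquiv.funCongrLeft ℤ ℤ e.symm).trans
      (LinearEquiv.sumArrowLequivProdArrow F K ℤ ℤ)).trans
      ((b.equivFun.symm.prodCongr (LinearEquiv.refl ℤ (K → ℤ))).trans φ)
  have hψ : ∀ h k, f (ψ h) k = h (e.symm (Sum.inr k)) := by
    intro h k
    simp only [ψ, LinearEquiv.trans_apply]
    rw [hφ]
    rfl
  refine ⟨LinearMap.toMatrix' ψ.toLinearMap, ?_, ?_⟩
  · rw [LinearMap.det_toMatrix']
    exact ψ.isUnit_det'
  · ext k s
    have h1 := hψ (Pi.single s 1) k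
    rw [hf, Matrix.mulVecLin_apply] at h1
    have h2 : ψ (Pi.single s 1) = (LinearMap.toMatrix' ψ.toLinearMap).col s := by
      ext t
      simp [LinearMap.toMatrix'_apply, Matrix.col]
    rw [h2] at h1
    rw [Matrix.mul_apply, Matrix.of_apply]
    refine Eq.trans h1 ?_
    rw [Pi.single_apply]
    have : (e.symm (Sum.inr k) = s) ↔ (e s = Sum.inr k) := by
      rw [Equiv.symm_apply_eq, eq_comm]
    simp only [this]

lemma snf_abstract (X : Matrix S K ℤ) (hX : Function.Surjective (X.transpose.mulVecLin))
    (σ : Equiv.Perm K) (c : K → ℤ) (hc : ∀ k, c k ≠ 0) (M : Matrix S S ℤ)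
    (hM : M = X * Matrix.diagonal c * (X.submatrix id σ).transpose) :
    ∃ (U W : Matrix S S ℤ) (d : S → ℤ), IsUnit U.det ∧ IsUnit W.det ∧
      U * M * W = Matrix.diagonal d ∧
      (Finset.univ.filter fun s => d s = 0).card = Fintype.card S - Fintype.card K ∧
      ∀ z : ℤ, z ≠ 0 → (Finset.univ.filter fun s => d s = z).card =
        (Finset.univ.filter fun k => c k = z).card := by
  have hle : Fintype.card K ≤ Fintype.card S := by
    have hrk := rank_null _ hX
    omega
  let F := Fin (Fintype.card S - Fintype.card K)
  let e : S ≃ F ⊕ K := Fintype.equivOfCardEq (by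
    simp only [F, Fintype.card_sum, Fintype.card_fin]; omega)
  have hX2 : Function.Surjective ((X.submatrix id σ).transpose.mulVecLin) := by
    intro h
    obtain ⟨y, hy⟩ := hX (h ∘ σ.symm)
    refine ⟨y, ?_⟩
    ext k
    have := congrFun hy (σ k)
    rw [Function.comp_apply, Equiv.symm_apply_apply] at this
    exact this
  obtain ⟨P, hP, hPX⟩ := exists_unimodular X hX e
  obtain ⟨Q, hQ, hQX⟩ := exists_unimodular _ hX2 e
  let d : S → ℤ := fun s => Sum.elim (fun _ => 0) c (e s)
  have hPX' : P.transpose * X =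
      (Matrix.of (fun k s => if e s = Sum.inr k then (1 : ℤ) else 0)).transpose := by
    rw [← hPX, Matrix.transpose_mul, Matrix.transpose_transpose]
  refine ⟨P.transpose, Q, d, by rwa [Matrix.det_transpose], hQ, ?_, ?_, ?_⟩
  · have : P.transpose * M * Q = (P.transpose * X) * Matrix.diagonal c *
        ((X.submatrix id σ).transpose * Q) := by
      rw [hM]; simp only [Matrix.mul_assoc]
    rw [this, hPX', hQX]
    ext s t
    rw [Matrix.mul_apply, Matrix.diagonal_apply]
    simp only [Matrix.mul_diagonal, Matrix.transpose_apply, Matrix.of_apply, d]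
    rcases hs : e s with i | k
    · simp
    · simp only [Sum.inr.injEq, Sum.elim_inr, ite_mul, one_mul, zero_mul,
        Finset.sum_ite_eq, Finset.mem_univ, if_true, mul_ite, mul_one, mul_zero]
      have : (e t = Sum.inr k) ↔ s = t := by
        rw [← hs, e.injective.eq_iff, eq_comm]
      by_cases hst : s = t
      · simp [hst, this.2 hst]
      · have h' : ¬ e t = Sum.inr k := fun h => hst (this.1 h)
        simp only [hst, if_false]
        apply Finset.sum_eq_zero
        intro k' _
        by_cases hk : k = k'
        · subst hk; simp [h']
        · simp [hk]
  · rw [Finset.card_filter, ← Equiv.sum_comp e.symm, Fintype.sum_sum_type]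
    simp [d, hc, F]
  · intro z hz
    rw [Finset.card_filter, Finset.card_filter, ← Equiv.sum_comp e.symm, Fintype.sum_sum_type]
    simp [d, hz.symm]

end LinAlg


section Tree

variable [Fintype V] [DecidableEq V] {G : SimpleGraph V} [DecidableRel G.Adj]

/-- Darts of non-pendant edges. -/
abbrev ND (G : SimpleGraph V) [DecidableRel G.Adj] : Type _ :=
  {d : G.Dart // G.degree d.fst ≠ 1 ∧ G.degree d.snd ≠ 1}

/-- distance on unordered pairs -/
noncomputable def sdist (G : SimpleGraph V) : Sym2 V → ℤ :=
  Sym2.lift ⟨fun x y => (G.dist x y : ℤ), fun x y => congrArg Nat.cast G.dist_comm⟩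

/-- indicator that both vertices are on the side of `a` -/
noncomputable def sind (G : SimpleGraph V) (a b : V) : Sym2 V → ℤ :=
  Sym2.lift ⟨fun x y => ind G a b x * ind G a b y, fun x y => mul_comm _ _⟩

/-- The factor matrix. -/
noncomputable def XM (G : SimpleGraph V) [DecidableRel G.Adj] :
    Matrix {s : Sym2 V // ¬ s.IsDiag} (Bool ⊕ ND G) ℤ := fun s k =>
  match k with
  | Sum.inl true => 1
  | Sum.inl false => sdist G s.1
  | Sum.inr d => sind G d.1.fst d.1.snd s.1

/-- The swap permutation of the factor index set. -/
def swp (G : SimpleGraph V) [DecidableRel G.Adj] : Equiv.Perm (Bool ⊕ ND G) :=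
  Equiv.sumCongr Equiv.boolNot
    (Function.Involutive.toPerm (fun d : ND G => (⟨d.1.symm, d.2.2, d.2.1⟩ : ND G))
      (fun d => Subtype.ext (Dart.symm_symm d.1)))

/-- The coefficients. -/
def cf (G : SimpleGraph V) [DecidableRel G.Adj] : Bool ⊕ ND G → ℤ :=
  Sum.elim (fun _ => 1) (fun _ => 2)

/-- A pendant side contains no pair. -/
lemma leaf_ind (hT : G.IsTree) {a b x y : V} (hab : G.Adj a b) (ha : G.degree a = 1)
    (hxy : x ≠ y) : ind G a b x * ind G a b y = 0 := by
  have hA : ∀ c, G.Adj a c → c = b := by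
    intro c hc
    obtain ⟨t, ht⟩ := Finset.card_eq_one.1 ha
    have h1 : c ∈ ({t} : Finset V) := ht ▸ (by simpa using hc)
    have h2 : b ∈ ({t} : Finset V) := ht ▸ (by simpa using hab)
    rw [Finset.mem_singleton] at h1 h2
    rw [h1, h2]
  have key : ∀ {t r : V} (q : G.Walk t r), r = a → t ≠ a → ind G a b t = 0 := by
    intro t r q
    induction q with
    | nil => intro h h'; exact absurd h h'
    | @cons t s r h q ih =>
      intro hr ht
      by_cases hs : s = a
      · subst hs
        rw [hA _ h.symm, ind_self_right]
      · rw [ind_adj hT hab h, ih hr hs]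
        intro he
        rcases Sym2.eq_iff.1 he with ⟨h1, h2⟩ | ⟨h1, h2⟩
        · exact ht h1.symm
        · exact hs h1.symm
  by_cases hx : x = a
  · obtain ⟨q⟩ := hT.1.preconnected y a
    rw [key q rfl (fun h => hxy (hx.trans h.symm)), mul_zero]
  · obtain ⟨q⟩ := hT.1.preconnected x a
    rw [key q rfl hx, zero_mul]

lemma factor (hT : G.IsTree) :
    max4MatrixZ G = XM G * Matrix.diagonal (cf G) * ((XM G).submatrix id (swp G)).transpose := by
  ext ⟨s, hs⟩ ⟨t, ht⟩
  induction s using Sym2.ind with | _ w x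
  induction t using Sym2.ind with | _ y z
  rw [Sym2.mk_isDiag_iff] at hs ht
  have h0 : max4MatrixZ G ⟨s(w, x), hs⟩ ⟨s(y, z), ht⟩ = (max4 G w x y z : ℤ) := rfl
  rw [h0, max4_eq hT, Matrix.mul_apply, Fintype.sum_sum_type, Fintype.sum_bool]
  simp only [Matrix.mul_diagonal, Matrix.transpose_apply, Matrix.submatrix_apply, id_eq]
  have e1 : XM G ⟨s(w, x), hs⟩ (Sum.inl true) * cf G (Sum.inl true) *
      XM G ⟨s(y, z), ht⟩ (swp G (Sum.inl true)) = G.dist y z := by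
    change (1 : ℤ) * 1 * (G.dist y z : ℤ) = _
    ring
  have e2 : XM G ⟨s(w, x), hs⟩ (Sum.inl false) * cf G (Sum.inl false) *
      XM G ⟨s(y, z), ht⟩ (swp G (Sum.inl false)) = G.dist w x := by
    change (G.dist w x : ℤ) * 1 * 1 = _
    ring
  have e3 : ∑ d : ND G, XM G ⟨s(w, x), hs⟩ (Sum.inr d) * cf G (Sum.inr d) *
      XM G ⟨s(y, z), ht⟩ (swp G (Sum.inr d)) = 2 * split G w x y z := by
    have : ∀ d : ND G, XM G ⟨s(w, x), hs⟩ (Sum.inr d) * cf G (Sum.inr d) *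
      XM G ⟨s(y, z), ht⟩ (swp G (Sum.inr d)) =
        (fun d : G.Dart => 2 * (ind G d.fst d.snd w * ind G d.fst d.snd x *
          (ind G d.snd d.fst y * ind G d.snd d.fst z))) d.1 := by
      intro d
      change (ind G d.1.fst d.1.snd w * ind G d.1.fst d.1.snd x) * 2 *
        (ind G d.1.snd d.1.fst y * ind G d.1.snd d.1.fst z) = _
      ring
    rw [Finset.sum_congr rfl (fun d _ => this d), split, Finset.mul_sum]
    refine (Finset.sum_subtype
      (p := fun d : G.Dart => G.degree d.fst ≠ 1 ∧ G.degree d.snd ≠ 1)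
      (Finset.univ.filter fun d : G.Dart => G.degree d.fst ≠ 1 ∧ G.degree d.snd ≠ 1)
      (fun d => by simp) (fun d : G.Dart => 2 * (ind G d.fst d.snd w * ind G d.fst d.snd x *
          (ind G d.snd d.fst y * ind G d.snd d.fst z)))).symm.trans ?_
    apply Finset.sum_subset (Finset.subset_univ _)
    intro d _ hd
    simp only [Finset.mem_filter, Finset.mem_univ, true_and, not_and_or, not_not] at hd
    rcases hd with hd | hd
    · rw [leaf_ind hT d.adj hd hs, zero_mul, mul_zero]
    · rw [leaf_ind hT d.adj.symm hd ht, mul_zero, mul_zero]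
  rw [e1, e2, e3]
  ring

lemma not_both_leaf (hT : G.IsTree) (hn3 : 3 ≤ Fintype.card V) {a b : V} (hab : G.Adj a b)
    (ha : G.degree a = 1) : G.degree b ≠ 1 := by
  intro hb
  have hA : ∀ c, G.Adj a c → c = b := by
    intro c hc
    obtain ⟨t, ht⟩ := Finset.card_eq_one.1 ha
    have h1 : c ∈ ({t} : Finset V) := ht ▸ (by simpa using hc)
    have h2 : b ∈ ({t} : Finset V) := ht ▸ (by simpa using hab)
    rw [Finset.mem_singleton] at h1 h2
    rw [h1, h2]
  have hB : ∀ c, G.Adj b c → c = a := by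
    intro c hc
    obtain ⟨t, ht⟩ := Finset.card_eq_one.1 hb
    have h1 : c ∈ ({t} : Finset V) := ht ▸ (by simpa using hc)
    have h2 : a ∈ ({t} : Finset V) := ht ▸ (by simpa using hab.symm)
    rw [Finset.mem_singleton] at h1 h2
    rw [h1, h2]
  have hall : ∀ x, x = a ∨ x = b := by
    intro x
    obtain ⟨q⟩ := hT.1.preconnected x a
    have : ∀ {p r : V} (q : G.Walk p r), r = a → p = a ∨ p = b := by
      intro p r q
      induction q with
      | nil => intro h; exact Or.inl h
      | cons h q ih =>
        intro hr
        rcases ih hr with rfl | rfl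
        · exact Or.inr (hA _ h.symm)
        · exact Or.inl (hB _ h.symm)
    exact this q rfl
  have : Fintype.card V ≤ 2 := by
    rw [← Finset.card_univ]
    refine (Finset.card_le_card (t := {a, b}) ?_).trans Finset.card_le_two
    intro x _
    simpa using hall x
  omega

lemma exists_other {a b : V} (hab : G.Adj a b) (ha : G.degree a ≠ 1) :
    ∃ c, G.Adj a c ∧ c ≠ b := by
  by_contra hcon
  push Not at hcon
  apply ha
  apply Finset.card_eq_one.2
  refine ⟨b, ?_⟩
  ext c
  simp only [mem_neighborFinset, Finset.mem_singleton]
  exact ⟨hcon c, fun h => h ▸ hab⟩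

lemma dist_two (hT : G.IsTree) {a b c : V} (hab : G.Adj a b) (hac : G.Adj a c) (hne : c ≠ b) :
    G.dist b c = 2 := by
  have h1 := F1 hT hac b
  have h2 : G.dist b a = 1 := dist_eq_one_iff_adj.2 hab.symm
  have h3 : G.dist b c ≠ 0 := fun h => hne ((hT.1.dist_eq_zero_iff).1 h).symm
  omega

/-- row of the factor matrix -/
noncomputable def row (G : SimpleGraph V) [DecidableRel G.Adj] (x y : V) : Bool ⊕ ND G → ℤ :=
  fun k => match k with
  | Sum.inl true => 1
  | Sum.inl false => G.dist x y
  | Sum.inr d => ind G d.1.fst d.1.snd x * ind G d.1.fst d.1.snd y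

lemma row_mem {x y : V} (h : x ≠ y) :
    row G x y ∈ LinearMap.range ((XM G).transpose.mulVecLin) := by
  refine ⟨Pi.single ⟨s(x, y), by simpa using h⟩ 1, ?_⟩
  rw [Matrix.mulVecLin_apply, Matrix.mulVec_single_one]
  ext k
  rcases k with (_ | _) | d <;> rfl

lemma surj (hT : G.IsTree) (hn3 : 3 ≤ Fintype.card V) :
    Function.Surjective ((XM G).transpose.mulVecLin) := by
  rw [← LinearMap.range_eq_top]
  set R := LinearMap.range ((XM G).transpose.mulVecLin) with hR
  haveI : Nontrivial V := Fintype.one_lt_card_iff_nontrivial.1 (by omega)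
  obtain ⟨w, hw⟩ := hT.exists_vert_degree_one_of_nontrivial
  obtain ⟨u, hwu⟩ : ∃ u, G.Adj w u := by
    have : 0 < G.degree w := by omega
    exact (G.degree_pos_iff_exists_adj w).1 this
  obtain ⟨v, huv, hvw⟩ := exists_other hwu.symm (not_both_leaf hT hn3 hwu hw)
  have hd : (Pi.single (Sum.inl false) 1 : Bool ⊕ ND G → ℤ) ∈ R := by
    have := R.sub_mem (row_mem (G := G) (x := w) (y := v) hvw.symm)
      (row_mem (G := G) (x := u) (y := v) huv.ne)
    convert this using 1
    ext k
    rcases k with (_ | _) | d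
    · simp only [Pi.single_eq_same, Pi.sub_apply, row]
      rw [dist_two hT hwu.symm huv hvw, dist_eq_one_iff_adj.2 huv]
      norm_num
    · simp [row]
    · simp only [Pi.sub_apply, row]
      rw [ind_adj hT d.1.adj hwu]
      · simp
      · intro h
        rcases Sym2.eq_iff.1 h with ⟨h1, h2⟩ | ⟨h1, h2⟩
        · exact d.2.1 (h1 ▸ hw)
        · exact d.2.2 (h2 ▸ hw)
  have hr : ∀ d : ND G, (Pi.single (Sum.inr d) 1 : Bool ⊕ ND G → ℤ) ∈ R := by
    intro d
    obtain ⟨c, hc, hcne⟩ := exists_other d.1.adj d.2.1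
    have := R.add_mem hd (R.sub_mem (row_mem (G := G) (x := d.1.fst) (y := c) hc.ne)
      (row_mem (G := G) (x := d.1.snd) (y := c) hcne.symm))
    convert this using 1
    have hdc := dist_two hT d.1.adj hc hcne
    have hdc' : G.dist d.1.fst c = 1 := dist_eq_one_iff_adj.2 hc
    ext k
    rcases k with (_ | _) | d'
    · simp only [Pi.sub_apply, Pi.add_apply, row, hdc, hdc']
      simp
    · simp [row]
    · simp only [Pi.sub_apply, Pi.add_apply, row]
      have hcc : ind G d.1.fst d.1.snd c = 1 := by
        simp [ind, G.dist_comm (u := c), hdc, hdc']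
      by_cases he : s(d'.1.fst, d'.1.snd) = s(d.1.fst, d.1.snd)
      · rcases Sym2.eq_iff.1 he with ⟨h1, h2⟩ | ⟨h1, h2⟩
        · have : d' = d := by
            apply Subtype.ext
            ext <;> assumption
          subst this
          simp [hcc, ind_self_left hT d'.1.adj, ind_self_right]
        · have : d' ≠ d := by
            rintro rfl
            exact d'.1.adj.ne h1
          rw [h1, h2, ind_symm hT d.1.adj c, hcc]
          simp [this]
      · have : d' ≠ d := by
          rintro rfl
          exact he rfl
        rw [ind_adj hT d'.1.adj d.1.adj he]
        simp [this]
  have ht : (Pi.single (Sum.inl true) 1 : Bool ⊕ ND G → ℤ) ∈ R := by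
    have e : row G w u = ∑ k, row G w u k • (Pi.single k 1 : Bool ⊕ ND G → ℤ) := by
      ext k
      simp [Finset.sum_apply, Pi.single_apply]
    rw [Fintype.sum_sum_type, Fintype.sum_bool] at e
    have h1 : row G w u (Sum.inl true) = 1 := rfl
    rw [h1, one_smul] at e
    have e' : (Pi.single (Sum.inl true) 1 : Bool ⊕ ND G → ℤ) =
      row G w u - row G w u (Sum.inl false) • (Pi.single (Sum.inl false) 1 : Bool ⊕ ND G → ℤ)
       - ∑ d : ND G, row G w u (Sum.inr d) • (Pi.single (Sum.inr d) 1 : Bool ⊕ ND G → ℤ) := by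
      rw [eq_sub_iff_add_eq, eq_sub_iff_add_eq]
      refine Eq.trans ?_ e.symm
      abel
    rw [e']
    exact R.sub_mem (R.sub_mem (row_mem hwu.ne) (R.smul_mem _ hd))
      (R.sum_mem fun d _ => R.smul_mem _ (hr d))
  rw [eq_top_iff]
  intro f _
  have e : f = ∑ k, f k • (Pi.single k 1 : Bool ⊕ ND G → ℤ) := by
    ext k
    simp [Finset.sum_apply, Pi.single_apply]
  rw [e]
  refine R.sum_mem fun k _ => R.smul_mem _ ?_
  rcases k with (_ | _) | d
  · exact hd
  · exact ht
  · exact hr d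

lemma card_fst_leaf :
    (Finset.univ.filter fun d : G.Dart => G.degree d.fst = 1).card =
    (Finset.univ.filter fun v : V => G.degree v = 1).card := by
  rw [Finset.card_eq_sum_card_fiberwise (f := fun d : G.Dart => d.fst)
    (t := Finset.univ.filter fun v : V => G.degree v = 1)]
  · rw [Finset.card_eq_sum_ones]
    apply Finset.sum_congr rfl
    intro v hv
    have hv' : G.degree v = 1 := by simpa using hv
    refine Eq.trans ?_ ((G.dart_fst_fiber_card_eq_degree v).trans hv')
    congr 1
    ext d
    simp only [Finset.mem_filter, Finset.mem_univ, true_and]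
    constructor
    · exact fun h => h.2
    · rintro rfl; exact ⟨hv', rfl⟩
  · intro d hd
    simpa using hd

lemma card_snd_leaf :
    (Finset.univ.filter fun d : G.Dart => G.degree d.snd = 1).card =
    (Finset.univ.filter fun v : V => G.degree v = 1).card := by
  rw [← card_fst_leaf (G := G)]
  apply Finset.card_bij' (fun d _ => d.symm) (fun d _ => d.symm) <;> simp [Dart.symm]

lemma card_ND (hT : G.IsTree) (hn3 : 3 ≤ Fintype.card V) :
    Fintype.card (ND G) + 2 * (Finset.univ.filter fun v : V => G.degree v = 1).card + 2 =
      2 * Fintype.card V := by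
  have h1 := G.dart_card_eq_twice_card_edges
  have h2 := hT.card_edgeFinset
  have h3 : Fintype.card (ND G) + (Finset.univ.filter fun d : G.Dart =>
      G.degree d.fst = 1 ∨ G.degree d.snd = 1).card = Fintype.card G.Dart := by
    rw [Fintype.card_subtype, ← Finset.card_univ, add_comm,
      ← Finset.card_filter_add_card_filter_not (s := (Finset.univ : Finset G.Dart))
        (fun d : G.Dart => G.degree d.fst = 1 ∨ G.degree d.snd = 1)]
    congr 3
    ext d
    rw [not_or]
  rw [Finset.filter_or, Finset.card_union_of_disjoint, card_fst_leaf, card_snd_leaf] at h3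
  · omega
  · rw [Finset.disjoint_filter]
    intro d _ h
    exact not_both_leaf hT hn3 d.adj h

end Tree

end Max4Aux

/-- Smith normal form of `Max4PC_T`: for a tree `T` on `n ≥ 3` vertices with `p`
pendant vertices, there are integer matrices `U, W`, invertible over `ℤ`, such that
`U * Max4PC_T * W` is diagonal, with diagonal entries `0` (with multiplicity
`C(n,2) - 2(n-p)`), `1` (with multiplicity `2`) and `2` (with multiplicity
`2(n-p-1)`). -/
theorem snf_max4Matrix {V : Type*} [Fintype V] [DecidableEq V] (G : SimpleGraph V)
    [DecidableRel G.Adj] (hT : G.IsTree) (n p : ℕ)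
    (hn : Fintype.card V = n) (hn3 : 3 ≤ n)
    (hp : (Finset.univ.filter fun v : V => G.degree v = 1).card = p) :
    ∃ (U W : Matrix {s : Sym2 V // ¬ s.IsDiag} {s : Sym2 V // ¬ s.IsDiag} ℤ)
      (d : {s : Sym2 V // ¬ s.IsDiag} → ℤ),
      IsUnit U.det ∧ IsUnit W.det ∧
      U * max4MatrixZ G * W = Matrix.diagonal d ∧
      (Finset.univ.filter fun s => d s = 0).card = Nat.choose n 2 - 2 * (n - p) ∧
      (Finset.univ.filter fun s => d s = 1).card = 2 ∧
      (Finset.univ.filter fun s => d s = 2).card = 2 * (n - p - 1) := by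

  classical
  have hn3' : 3 ≤ Fintype.card V := hn ▸ hn3
  obtain ⟨U, W, d, hU, hW, hd, h0, hz⟩ := Max4Aux.snf_abstract (Max4Aux.XM G)
    (Max4Aux.surj hT hn3') (Max4Aux.swp G) (Max4Aux.cf G)
    (by rintro (k | k) <;> simp [Max4Aux.cf]) (max4MatrixZ G) (Max4Aux.factor hT)
  have hND := Max4Aux.card_ND hT hn3'
  rw [hp, hn] at hND
  refine ⟨U, W, d, hU, hW, hd, ?_, ?_, ?_⟩
  · rw [h0, Sym2.card_subtype_not_diag, hn, Fintype.card_sum, Fintype.card_bool]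
    omega
  · rw [hz 1 one_ne_zero, Finset.card_filter, Fintype.sum_sum_type]
    simp [Max4Aux.cf]
  · rw [hz 2 two_ne_zero, Finset.card_filter, Fintype.sum_sum_type]
    simp only [Max4Aux.cf, Sum.elim_inl, Sum.elim_inr]
    simp
    omega
end

section
/- Let T be a tree on n ≥ 3 vertices with exactly p pendant vertices. Viewing Max4PC_T as a real symmetric matrix, the number of positive eigenvalues of Max4PC_T (counted with multiplicity) is n − p, the number of negative eigenvalues is n − p, and the multiplicity of the eigenvalue 0 is binom(n,2) − 2(n − p). -/
open SimpleGraph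

variable {V : Type*}

/-- The matrix `Max4PC_T` as a real matrix, with rows and columns indexed
by the 2-element subsets of the vertex set (non-diagonal elements of `Sym2 V`). -/
noncomputable def max4MatrixR [Fintype V] [DecidableEq V] (G : SimpleGraph V) :
    Matrix {s : Sym2 V // ¬ s.IsDiag} {s : Sym2 V // ¬ s.IsDiag} ℝ :=
  fun p q => (max4Sym2 G p.1 q.1 : ℝ)


section linalg
open Matrix

lemma card_le_of_pos {N ι P : Type*} [Fintype N] [Fintype ι] [Fintype P] [DecidableEq P]
    (M : Matrix N N ℝ) (U : Matrix ι N ℝ)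
    (hU : ∀ z : N → ℝ, U *ᵥ z = 0 → z ⬝ᵥ (M *ᵥ z) ≤ 0)
    (e : P → N → ℝ) (l : P → ℝ) (hl : ∀ j, 0 < l j)
    (he : ∀ j, M *ᵥ e j = l j • e j)
    (ho : ∀ i j, e i ⬝ᵥ e j = if i = j then 1 else 0) :
    Fintype.card P ≤ Fintype.card ι := by
  let L : (P → ℝ) →ₗ[ℝ] (ι → ℝ) := U.mulVecLin ∘ₗ (Matrix.of e).vecMulLinear
  have hL : Function.Injective L := by
    rw [← LinearMap.ker_eq_bot, LinearMap.ker_eq_bot']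
    intro t ht
    have h1 : U *ᵥ (t ᵥ* Matrix.of e) = 0 := by simpa [L] using ht
    have h2 := hU _ h1
    have h3 : t ᵥ* Matrix.of e = ∑ j, t j • e j := by
      rw [Matrix.vecMul_eq_sum]; rfl
    have h4 : (t ᵥ* Matrix.of e) ⬝ᵥ (M *ᵥ (t ᵥ* Matrix.of e)) = ∑ j, l j * (t j) ^ 2 := by
      rw [h3, Matrix.mulVec_sum, sum_dotProduct]
      refine Finset.sum_congr rfl fun i _ => ?_
      rw [dotProduct_sum, Finset.sum_eq_single i]
      · rw [Matrix.mulVec_smul, he]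
        simp [ho]; ring
      · intro j _ hj
        rw [Matrix.mulVec_smul, he]
        simp [ho, hj.symm]
      · simp
    rw [h4] at h2
    have h5 : ∀ j ∈ Finset.univ, 0 ≤ l j * (t j) ^ 2 := fun j _ =>
      mul_nonneg (hl j).le (sq_nonneg _)
    have h6 := (Finset.sum_eq_zero_iff_of_nonneg h5).1 (le_antisymm h2 (Finset.sum_nonneg h5))
    funext j
    have := h6 j (Finset.mem_univ j)
    have hj := (hl j).ne'
    simpa [hj] using this
  have := LinearMap.finrank_le_finrank_of_injective hL
  simpa using this

lemma inertia_aux {N ι : Type*} [Fintype N] [DecidableEq N] [Fintype ι]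
    (M : Matrix N N ℝ) (U W : Matrix ι N ℝ) (hM : M = Uᵀ * U - Wᵀ * W)
    (hind : ∀ x y : ι → ℝ, x ᵥ* U + y ᵥ* W = 0 → x = 0 ∧ y = 0) :
    ((M.charpoly.roots.filter fun x => 0 < x).card = Fintype.card ι) ∧
    ((M.charpoly.roots.filter fun x => x < 0).card = Fintype.card ι) ∧
    Multiset.count (0 : ℝ) M.charpoly.roots + 2 * Fintype.card ι = Fintype.card N := by
  classical
  have hA : M.IsHermitian := by
    rw [hM]
    simp [Matrix.IsHermitian, conjTranspose_eq_transpose_of_trivial]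
  have hmul : ∀ z, M *ᵥ z = (U *ᵥ z) ᵥ* U - (W *ᵥ z) ᵥ* W := by
    intro z
    rw [hM, Matrix.sub_mulVec, ← Matrix.mulVec_mulVec, ← Matrix.mulVec_mulVec,
      Matrix.mulVec_transpose, Matrix.mulVec_transpose]
  have hquad : ∀ z, z ⬝ᵥ (M *ᵥ z) = (U *ᵥ z) ⬝ᵥ (U *ᵥ z) - (W *ᵥ z) ⬝ᵥ (W *ᵥ z) := by
    intro z
    rw [hmul, dotProduct_sub, dotProduct_comm, ← Matrix.dotProduct_mulVec,
      dotProduct_comm z, ← Matrix.dotProduct_mulVec]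
  have ho : ∀ i j, (⇑(hA.eigenvectorBasis i) : N → ℝ) ⬝ᵥ ⇑(hA.eigenvectorBasis j)
      = if i = j then 1 else 0 := by
    intro i j
    have := (orthonormal_iff_ite.1 hA.eigenvectorBasis.orthonormal) i j
    rw [← this, EuclideanSpace.inner_eq_star_dotProduct, dotProduct_comm]
    simp
  have hnn : ∀ v : ι → ℝ, 0 ≤ v ⬝ᵥ v := fun v =>
    Finset.sum_nonneg fun i _ => mul_self_nonneg _
  have hpos : Fintype.card {i // 0 < hA.eigenvalues i} ≤ Fintype.card ι := by
    refine card_le_of_pos M U ?_ (fun i => ⇑(hA.eigenvectorBasis i.1))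
      (fun i => hA.eigenvalues i.1) (fun i => i.2)
      (fun i => hA.mulVec_eigenvectorBasis i.1) ?_
    · intro z hz
      rw [hquad, hz]
      have := hnn (W *ᵥ z)
      simp only [dotProduct_zero]
      linarith
    · intro i j
      rw [ho]
      simp [Subtype.ext_iff]
  have hneg : Fintype.card {i // hA.eigenvalues i < 0} ≤ Fintype.card ι := by
    refine card_le_of_pos (-M) W ?_ (fun i => ⇑(hA.eigenvectorBasis i.1))
      (fun i => - hA.eigenvalues i.1) (fun i => by linarith [i.2]) ?_ ?_
    · intro z hz
      rw [Matrix.neg_mulVec, dotProduct_neg, hquad, hz]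
      have := hnn (U *ᵥ z)
      simp only [dotProduct_zero]
      linarith
    · intro i
      rw [Matrix.neg_mulVec, hA.mulVec_eigenvectorBasis i.1, neg_smul]
    · intro i j
      rw [ho]
      simp [Subtype.ext_iff]
  have hrank : 2 * Fintype.card ι ≤ M.rank := by
    let B : Matrix (ι ⊕ ι) N ℝ := Matrix.fromRows U W
    have hB : B.rank = 2 * Fintype.card ι := by
      have hli : LinearIndependent ℝ B.row := by
        rw [← Matrix.vecMul_injective_iff, ← Matrix.coe_vecMulLinear, ← LinearMap.ker_eq_bot,
          LinearMap.ker_eq_bot']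
        intro t ht
        have h1 := hind (t ∘ Sum.inl) (t ∘ Sum.inr) (by
          have h0 : t ᵥ* Matrix.fromRows U W = 0 := ht
          rwa [Matrix.vecMul_fromRows] at h0)
        funext i
        rcases i with i | i
        · exact congrFun h1.1 i
        · exact congrFun h1.2 i
      rw [hli.rank_matrix]
      simp [two_mul]
    rw [← hB]
    have hker : LinearMap.ker M.mulVecLin ≤ LinearMap.ker B.mulVecLin := by
      intro z hz
      simp only [LinearMap.mem_ker, Matrix.mulVecLin_apply] at hz ⊢
      rw [hmul] at hz
      have h1 := hind (U *ᵥ z) (-(W *ᵥ z)) (by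
        rw [Matrix.neg_vecMul, ← sub_eq_add_neg]; exact hz)
      rw [Matrix.fromRows_mulVec, h1.1, neg_eq_zero.1 h1.2]
      funext i
      rcases i with i | i <;> rfl
    have h1 := Submodule.finrank_mono hker
    have h2 := M.mulVecLin.finrank_range_add_finrank_ker
    have h3 := B.mulVecLin.finrank_range_add_finrank_ker
    unfold Matrix.rank
    omega
  rw [hA.rank_eq_card_non_zero_eigs] at hrank
  rw [hA.roots_charpoly_eq_eigenvalues]
  have c1 : ((Multiset.map (RCLike.ofReal ∘ hA.eigenvalues) Finset.univ.val).filter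
      fun x : ℝ => 0 < x).card = Fintype.card {i // 0 < hA.eigenvalues i} := by
    rw [Multiset.filter_map, Multiset.card_map, Fintype.card_subtype]
    rfl
  have c2 : ((Multiset.map (RCLike.ofReal ∘ hA.eigenvalues) Finset.univ.val).filter
      fun x : ℝ => x < 0).card = Fintype.card {i // hA.eigenvalues i < 0} := by
    rw [Multiset.filter_map, Multiset.card_map, Fintype.card_subtype]
    rfl
  have c3 : Multiset.count (0 : ℝ) (Multiset.map (RCLike.ofReal ∘ hA.eigenvalues) Finset.univ.val)
      = Fintype.card {i // hA.eigenvalues i = 0} := by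
    rw [Multiset.count_map, Fintype.card_subtype]
    simp only [eq_comm (a := (0 : ℝ))]
    rfl
  have s1 : Fintype.card {i // hA.eigenvalues i ≠ 0} =
      Fintype.card {i // 0 < hA.eigenvalues i} + Fintype.card {i // hA.eigenvalues i < 0} := by
    rw [Fintype.card_subtype, Fintype.card_subtype, Fintype.card_subtype,
      ← Finset.card_union_of_disjoint]
    · congr 1
      ext i
      simp only [Finset.mem_filter, Finset.mem_union, Finset.mem_univ, true_and]
      rw [ne_iff_lt_or_gt, or_comm]
    · rw [Finset.disjoint_filter]
      intro i _ h1 h2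
      exact lt_asymm h1 h2
  have s2 := Fintype.card_subtype_compl (fun i => hA.eigenvalues i = 0)
  have s3 := Fintype.card_subtype_le (fun i => hA.eigenvalues i = 0)
  rw [c1, c2, c3]
  have s4 : Fintype.card {i // ¬ hA.eigenvalues i = 0} = Fintype.card {i // hA.eigenvalues i ≠ 0} := rfl
  omega

end linalg

section tree
open Classical

/-- the side of `w` with respect to the edge `e` -/
def eside (G : SimpleGraph V) (e : Sym2 V) (w : V) : Prop :=
  (G.deleteEdges {e}).Reachable e.out.1 w

lemma eside_walk (G : SimpleGraph V) (e : Sym2 V) {u v : V} (p : G.Walk u v)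
    (h : e ∉ p.edges) : eside G e u ↔ eside G e v := by
  have := (p.toDeleteEdge e h).reachable
  exact ⟨fun h => h.trans this, fun h => h.trans this.symm⟩

lemma eside_adj (G : SimpleGraph V) (e : Sym2 V) {u v : V} (p : G.Adj u v)
    (h : e ≠ s(u, v)) : eside G e u ↔ eside G e v :=
  eside_walk G e p.toWalk (by simpa using h)

lemma eside_edge (G : SimpleGraph V) (hT : G.IsTree) {u v : V} (h : G.Adj u v) :
    eside G s(u, v) u ↔ ¬ eside G s(u, v) v := by
  have hb : G.IsBridge s(u, v) :=
    isAcyclic_iff_forall_isBridge.1 hT.isAcyclic (by simpa using h)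
  rw [isBridge_iff] at hb
  have hout : s((s(u, v)).out.1, (s(u, v)).out.2) = s(u, v) := Quot.out_eq _
  unfold eside
  have : (s(u, v)).out.1 = u ∨ (s(u, v)).out.1 = v := by
    have := Sym2.out_fst_mem s(u, v)
    simpa using this
  rcases this with h1 | h1
  · rw [h1]; simp [hb]
  · rw [h1]
    have : ¬ (G.deleteEdges {s(u, v)}).Reachable v u := fun h => hb h.symm
    simp [this]

lemma eside_trail (G : SimpleGraph V) (hT : G.IsTree) (e : Sym2 V) {u v : V} (p : G.Walk u v)
    (hp : p.edges.Nodup) (h : e ∈ p.edges) : eside G e u ↔ ¬ eside G e v := by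
  induction p with
  | nil => simp at h
  | @cons a b c hab q ih =>
    rw [Walk.edges_cons, List.nodup_cons] at hp
    rw [Walk.edges_cons, List.mem_cons] at h
    by_cases he : e = s(a, b)
    · subst he
      rw [eside_edge G hT hab, eside_walk G _ q hp.1]
    · rw [eside_adj G e hab he]
      exact ih hp.2 (h.resolve_left he)

lemma eside_path_iff (G : SimpleGraph V) (hT : G.IsTree) (e : Sym2 V) {u v : V} (p : G.Walk u v)
    (hp : p.IsPath) : e ∈ p.edges ↔ ¬ (eside G e u ↔ eside G e v) := by
  constructor
  · intro h
    have := eside_trail G hT e p hp.isTrail.edges_nodup h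
    tauto
  · intro h
    by_contra h2
    exact h (eside_walk G e p h2)

lemma dist_eq_sum [Fintype V] (G : SimpleGraph V) (hT : G.IsTree) (u v : V) :
    G.dist u v = ∑ e : G.edgeSet, if (eside G e.1 u ↔ eside G e.1 v) then 0 else 1 := by
  obtain ⟨p, hp, hl⟩ := hT.connected.exists_path_of_dist u v
  rw [← hl, ← Walk.length_edges, ← List.toFinset_card_of_nodup hp.isTrail.edges_nodup]
  have : ∀ e : G.edgeSet, (if (eside G e.1 u ↔ eside G e.1 v) then 0 else 1)
      = if e.1 ∈ p.edges.toFinset then 1 else 0 := by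
    intro e
    have := eside_path_iff G hT e.1 p hp
    by_cases h : (eside G e.1 u ↔ eside G e.1 v)
    · rw [if_pos h, if_neg (by rw [List.mem_toFinset, this]; simpa using h)]
    · rw [if_neg h, if_pos (by rw [List.mem_toFinset, this]; exact h)]
  simp only [this]
  rw [← Finset.card_filter]
  refine Finset.card_bij' (i := fun e he => (⟨e, p.edges_subset_edgeSet (by simpa using he)⟩ : G.edgeSet))
    (j := fun e _ => e.1) ?_ ?_ ?_ ?_ <;> simp

lemma compat_aux (G : SimpleGraph V) (hT : G.IsTree) (e : Sym2 V) (a b p q : V)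
    (h1 : eside G e p ↔ eside G e q)
    (h2 : ¬ (eside G s(a, b) p ↔ eside G s(a, b) q)) : eside G e p ↔ eside G e a := by
  obtain ⟨w, hw, -⟩ := hT.connected.exists_path_of_dist p q
  have he : e ∉ w.edges := by
    rw [eside_path_iff G hT e w hw]; simpa using h1
  have hab : s(a, b) ∈ w.edges := by
    rw [eside_path_iff G hT _ w hw]; exact h2
  have ha := w.fst_mem_support_of_mem_edges hab
  exact eside_walk G e (w.takeUntil a ha) fun h => he (w.edges_takeUntil_subset_edges ha h)

lemma compat (G : SimpleGraph V) (hT : G.IsTree) (e f : Sym2 V) (w x y z : V)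
    (h1 : eside G e w ↔ eside G e x) (h2 : eside G e y ↔ eside G e z)
    (h3 : ¬ (eside G f w ↔ eside G f x)) (h4 : ¬ (eside G f y ↔ eside G f z)) :
    (eside G e w ↔ eside G e y) := by
  induction f with
  | _ a b =>
    have := compat_aux G hT e a b w x h1 h3
    have := compat_aux G hT e a b y z h2 h4
    tauto

/-- sign -/
noncomputable def sg (G : SimpleGraph V) (e : Sym2 V) (w : V) : ℝ := if eside G e w then 1 else -1

/-- half sum -/
noncomputable def ssum (G : SimpleGraph V) (e : Sym2 V) (w x : V) : ℝ := (sg G e w + sg G e x) / 2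

/-- separation indicator -/
noncomputable def sep (G : SimpleGraph V) (e : Sym2 V) (w x : V) : ℝ := (1 - sg G e w * sg G e x) / 2

lemma sg_cases (G : SimpleGraph V) (e : Sym2 V) (w : V) :
    (eside G e w ∧ sg G e w = 1) ∨ (¬ eside G e w ∧ sg G e w = -1) := by
  unfold sg
  by_cases h : eside G e w <;> simp [h]

lemma entry_swap (G : SimpleGraph V) (e : Sym2 V) (w x y z : V) :
    1 + sep G e w x * sep G e y z - ssum G e w x * ssum G e y z =
      1 + sep G e w y * sep G e x z - ssum G e w y * ssum G e x z := by
  unfold sep ssum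
  rcases sg_cases G e w with ⟨-, h1⟩ | ⟨-, h1⟩ <;> rcases sg_cases G e x with ⟨-, h2⟩ | ⟨-, h2⟩ <;>
  rcases sg_cases G e y with ⟨-, h3⟩ | ⟨-, h3⟩ <;> rcases sg_cases G e z with ⟨-, h4⟩ | ⟨-, h4⟩ <;>
  rw [h1, h2, h3, h4] <;> norm_num

lemma entry_ge (G : SimpleGraph V) (e : Sym2 V) (w x y z : V) :
    sep G e w x + sep G e y z ≤
    1 + sep G e w x * sep G e y z - ssum G e w x * ssum G e y z := by
  unfold sep ssum
  rcases sg_cases G e w with ⟨-, h1⟩ | ⟨-, h1⟩ <;> rcases sg_cases G e x with ⟨-, h2⟩ | ⟨-, h2⟩ <;>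
  rcases sg_cases G e y with ⟨-, h3⟩ | ⟨-, h3⟩ <;> rcases sg_cases G e z with ⟨-, h4⟩ | ⟨-, h4⟩ <;>
  rw [h1, h2, h3, h4] <;> norm_num

lemma entry_le (G : SimpleGraph V) (e : Sym2 V) (w x y z : V)
    (hc : ¬ ((eside G e w ↔ eside G e x) ∧
        (eside G e y ↔ eside G e z) ∧ ¬ (eside G e w ↔ eside G e y))) :
    1 + sep G e w x * sep G e y z - ssum G e w x * ssum G e y z ≤
      sep G e w x + sep G e y z := by
  unfold sep ssum
  rcases sg_cases G e w with ⟨k1, h1⟩ | ⟨k1, h1⟩ <;>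
  rcases sg_cases G e x with ⟨k2, h2⟩ | ⟨k2, h2⟩ <;>
  rcases sg_cases G e y with ⟨k3, h3⟩ | ⟨k3, h3⟩ <;>
  rcases sg_cases G e z with ⟨k4, h4⟩ | ⟨k4, h4⟩ <;>
  rw [h1, h2, h3, h4] <;> first | (norm_num; done) | (exfalso; simp [k1, k2, k3, k4] at hc)

lemma sep_comm (G : SimpleGraph V) (e : Sym2 V) (w x : V) : sep G e w x = sep G e x w := by
  unfold sep; ring

lemma ssum_comm (G : SimpleGraph V) (e : Sym2 V) (w x : V) : ssum G e w x = ssum G e x w := by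
  unfold ssum; ring

lemma max4_eq [Fintype V] (G : SimpleGraph V) (hT : G.IsTree) (w x y z : V) :
    (max4 G w x y z : ℝ) = ∑ e : G.edgeSet,
      (1 + sep G e.1 w x * sep G e.1 y z - ssum G e.1 w x * ssum G e.1 y z) := by
  have hd : ∀ u v, (G.dist u v : ℝ) = ∑ e : G.edgeSet, sep G e.1 u v := by
    intro u v
    rw [dist_eq_sum G hT]
    push_cast
    refine Finset.sum_congr rfl fun e _ => ?_
    unfold sep sg
    by_cases h1 : eside G e.1 u <;> by_cases h2 : eside G e.1 v <;> simp [h1, h2] <;> norm_num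
  have hmax : (max4 G w x y z : ℝ) = max ((G.dist w x : ℝ) + G.dist y z)
      (max ((G.dist w y : ℝ) + G.dist x z) ((G.dist w z : ℝ) + G.dist x y)) := by
    simp [max4]
  rw [hmax]
  simp only [hd, ← Finset.sum_add_distrib]
  apply le_antisymm
  · refine max_le ?_ (max_le ?_ ?_) <;> refine Finset.sum_le_sum fun e _ => ?_
    · exact entry_ge G e.1 w x y z
    · rw [entry_swap]; exact entry_ge G e.1 w y x z
    · rw [sep_comm G e.1 y z, ssum_comm G e.1 y z, entry_swap, sep_comm G e.1 x y,
        ssum_comm G e.1 x y]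
      exact entry_ge G e.1 w z y x
  · by_cases hbad : ∃ e : G.edgeSet, (eside G e.1 w ↔ eside G e.1 x) ∧
      (eside G e.1 y ↔ eside G e.1 z) ∧ ¬ (eside G e.1 w ↔ eside G e.1 y)
    · obtain ⟨e, he1, he2, he3⟩ := hbad
      refine le_trans ?_ (le_max_right _ _)
      refine le_trans ?_ (le_max_left _ _)
      refine Finset.sum_le_sum fun f _ => ?_
      rw [entry_swap]
      apply entry_le
      rintro ⟨h1, h2, h3⟩
      exact he3 (compat G hT e.1 f.1 w x y z he1 he2 h3 (by rw [← h1, ← h2]; exact h3))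
    · refine le_trans ?_ (le_max_left _ _)
      refine Finset.sum_le_sum fun f _ => ?_
      exact entry_le G f.1 w x y z fun h => hbad ⟨f, h⟩

end tree

section main
open Classical

/-- leaf -/
def lf (G : SimpleGraph V) (v : V) : Prop := ∃! u, G.Adj v u

/-- pendant edge -/
def pend (G : SimpleGraph V) (e : Sym2 V) : Prop := ∃ l ∈ e, lf G l

lemma leaf_side (G : SimpleGraph V) (hT : G.IsTree) {l u : V} (hl : lf G l) (h : G.Adj l u) (w : V)
    (hw : eside G s(l, u) l ↔ eside G s(l, u) w) : w = l := by
  by_contra hne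
  obtain ⟨p, hp, -⟩ := hT.connected.exists_path_of_dist l w
  have h1 : s(l, u) ∈ p.edges := by
    cases p with
    | nil => exact absurd rfl hne
    | @cons _ v _ hv q =>
      have : v = u := hl.unique hv h
      subst this
      simp
  exact (eside_path_iff G hT _ p hp).1 h1 hw

lemma not_both [Fintype V] (G : SimpleGraph V) (hT : G.IsTree) (h3 : 3 ≤ Fintype.card V) {l u : V}
    (h : G.Adj l u) (hl : lf G l) (hu : lf G u) : False := by
  have h1 := leaf_side G hT hl h
  have h2 := leaf_side G hT hu h.symm
  have h4 := eside_edge G hT h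
  rw [Sym2.eq_swap] at h2
  have : (Finset.univ : Finset V) ⊆ {l, u} := by
    intro w _
    have a1 := h1 w
    have a2 := h2 w
    simp only [Finset.mem_insert, Finset.mem_singleton]
    tauto
  have := (Finset.card_le_card this).trans Finset.card_le_two
  rw [Finset.card_univ] at this
  omega

lemma card_pend [Fintype V] (G : SimpleGraph V) (hT : G.IsTree) (h3 : 3 ≤ Fintype.card V) :
    Fintype.card {v // lf G v} = Fintype.card {e : G.edgeSet // pend G e.1} := by
  choose nb hnb _ using fun v : {v // lf G v} => v.2
  let F : {v // lf G v} → {e : G.edgeSet // pend G e.1} := fun v =>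
    ⟨⟨s(v.1, nb v), (hnb v)⟩, ⟨v.1, by simp, v.2⟩⟩
  refine Fintype.card_of_bijective (f := F) ⟨?_, ?_⟩
  · intro a b hab
    have h1 : s(a.1, nb a) = s(b.1, nb b) := congrArg (fun e => e.1.1) hab
    rw [Sym2.eq_iff] at h1
    rcases h1 with h1 | h1
    · exact Subtype.ext h1.1
    · exfalso
      have := hnb a
      rw [h1.2] at this
      exact not_both G hT h3 this a.2 b.2
  · rintro ⟨⟨e, he⟩, l, hl, hlf⟩
    refine ⟨⟨l, hlf⟩, ?_⟩
    apply Subtype.ext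
    apply Subtype.ext
    show s(l, nb ⟨l, hlf⟩) = e
    obtain ⟨u, rfl⟩ := hl
    rw [hlf.unique (hnb ⟨l, hlf⟩) he]

lemma pend_ssum (G : SimpleGraph V) (hT : G.IsTree) (e : Sym2 V) (he : e ∈ G.edgeSet)
    (hp : pend G e) : ∃ t : ℝ, t * t = 1 ∧ ∀ w x, w ≠ x → ssum G e w x = t * (1 - sep G e w x) := by
  obtain ⟨l, ⟨u, rfl⟩, hl⟩ := hp
  have h1 : ∀ w, w ≠ l → sg G s(l, u) w = - sg G s(l, u) l := by
    intro w hw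
    have := mt (leaf_side G hT hl he w) hw
    rcases sg_cases G s(l, u) w with ⟨k1, h1⟩ | ⟨k1, h1⟩ <;>
    rcases sg_cases G s(l, u) l with ⟨k2, h2⟩ | ⟨k2, h2⟩ <;> rw [h1, h2] <;>
    first | (exfalso; tauto) | norm_num
  have h2 : sg G s(l, u) l * sg G s(l, u) l = 1 := by
    rcases sg_cases G s(l, u) l with ⟨-, h⟩ | ⟨-, h⟩ <;> rw [h] <;> norm_num
  refine ⟨- sg G s(l, u) l, by linarith, ?_⟩
  intro w x hwx
  unfold ssum sep
  by_cases hw : w = l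
  · subst hw
    rw [h1 x hwx.symm]
    linear_combination (-sg G s(w, u) w / 2) * h2
  · rw [h1 w hw]
    by_cases hx : x = l
    · subst hx
      linear_combination (-sg G s(x, u) x / 2) * h2
    · rw [h1 x hx]
      linear_combination (sg G s(l, u) l / 2) * h2

lemma pend_entry (G : SimpleGraph V) (hT : G.IsTree) (e : Sym2 V) (he : e ∈ G.edgeSet)
    (hp : pend G e) {w x y z : V} (h1 : w ≠ x) (h2 : y ≠ z) :
    1 + sep G e w x * sep G e y z - ssum G e w x * ssum G e y z = sep G e w x + sep G e y z := by
  obtain ⟨t, ht, h⟩ := pend_ssum G hT e he hp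
  rw [h w x h1, h y z h2]
  linear_combination (-(1 - sep G e w x) * (1 - sep G e y z)) * ht

lemma sg_adj (G : SimpleGraph V) (e : Sym2 V) {a b : V} (h : G.Adj a b) (hne : e ≠ s(a, b)) :
    sg G e a = sg G e b := by
  unfold sg
  simp only [eside_adj G e h hne]

lemma sg_sq (G : SimpleGraph V) (e : Sym2 V) (a : V) : sg G e a * sg G e a = 1 := by
  rcases sg_cases G e a with ⟨-, h⟩ | ⟨-, h⟩ <;> rw [h] <;> norm_num

lemma sg_edge (G : SimpleGraph V) (hT : G.IsTree) {a b : V} (h : G.Adj a b) :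
    sg G s(a, b) b = - sg G s(a, b) a := by
  have := eside_edge G hT h
  unfold sg
  by_cases h1 : eside G s(a, b) a <;> by_cases h2 : eside G s(a, b) b <;> simp [h1, h2] <;> tauto

lemma sep_adj_ne (G : SimpleGraph V) (e : Sym2 V) {a b : V} (h : G.Adj a b) (hne : e ≠ s(a, b)) :
    sep G e a b = 0 := by
  unfold sep
  rw [sg_adj G e h hne, sg_sq]; norm_num

lemma sep_adj_eq (G : SimpleGraph V) (hT : G.IsTree) {a b : V} (h : G.Adj a b) :
    sep G s(a, b) a b = 1 := by
  unfold sep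
  rw [sg_edge G hT h]
  linear_combination sg_sq G s(a, b) a / 2

lemma indep [Fintype V] (G : SimpleGraph V) (hT : G.IsTree) (h3 : 3 ≤ Fintype.card V)
    (α : ℝ) (X Y : G.edgeSet → ℝ) (hY : ∀ e, pend G e.1 → Y e = 0)
    (H : ∀ a b, a ≠ b → α + ∑ e, X e * sep G e.1 a b + ∑ e, Y e * ssum G e.1 a b = 0) :
    α = 0 ∧ (∀ e, X e = 0) ∧ (∀ e, Y e = 0) := by
  have : Nontrivial V := Fintype.one_lt_card_iff_nontrivial.1 (by omega)
  obtain ⟨h, hh⟩ : ∃ h : V → ℝ, ∀ v, h v = α / 2 + ∑ e, Y e * (sg G e.1 v / 2) := ⟨_, fun v => rfl⟩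
  have H' : ∀ a b, a ≠ b → ∑ e, X e * sep G e.1 a b = - h a - h b := by
    intro a b hab
    have h1 := H a b hab
    have : ∑ e, Y e * ssum G e.1 a b =
        ∑ e, Y e * (sg G e.1 a / 2) + ∑ e, Y e * (sg G e.1 b / 2) := by
      rw [← Finset.sum_add_distrib]
      refine Finset.sum_congr rfl fun e _ => ?_
      unfold ssum; ring
    rw [hh, hh]
    linarith
  have hq : ∀ a b (hab : G.Adj a b), ∑ e, X e * sep G e.1 a b = X ⟨s(a, b), hab⟩ := by
    intro a b hab
    rw [Finset.sum_eq_single ⟨s(a, b), hab⟩]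
    · rw [sep_adj_eq G hT hab, mul_one]
    · intro e _ he
      rw [sep_adj_ne G e.1 hab (fun h => he (Subtype.ext h)), mul_zero]
    · simp
  have hdiff : ∀ a b (hab : G.Adj a b), h a - h b = Y ⟨s(a, b), hab⟩ * sg G s(a, b) a := by
    intro a b hab
    rw [hh, hh, add_sub_add_left_eq_sub, ← Finset.sum_sub_distrib,
      Finset.sum_eq_single ⟨s(a, b), hab⟩]
    · simp only
      rw [sg_edge G hT hab]; ring
    · intro e _ he
      rw [sg_adj G e.1 hab (fun h => he (Subtype.ext h)), sub_self]
    · simp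
  have hnl : ∀ v, ¬ lf G v → h v = 0 := by
    intro v hv
    obtain ⟨u, hu⟩ := hT.connected.preconnected.exists_adj_of_nontrivial v
    have : ∃ w, G.Adj v w ∧ w ≠ u := by
      by_contra hcon
      push Not at hcon
      exact hv ⟨u, hu, hcon⟩
    obtain ⟨w, hw, hwu⟩ := this
    have h1 : ∑ e, X e * sep G e.1 u w = ∑ e, X e * sep G e.1 u v + ∑ e, X e * sep G e.1 v w := by
      rw [← Finset.sum_add_distrib]
      refine Finset.sum_congr rfl fun e _ => ?_
      rw [← mul_add]
      congr 1
      by_cases e1 : e.1 = s(u, v)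
      · have : e.1 ≠ s(v, w) := by
          rw [e1]; intro h; rw [Sym2.eq_iff] at h
          rcases h with h | h
          · exact hw.ne h.2
          · exact hwu h.1.symm
        rw [sep_adj_ne G e.1 hw this]
        unfold sep
        rw [sg_adj G e.1 hw this]; ring
      · rw [sep_adj_ne G e.1 hu.symm e1]
        unfold sep
        rw [sg_adj G e.1 hu.symm e1]; ring
    rw [H' u w hwu.symm, H' u v hu.ne', H' v w hw.ne] at h1
    linarith
  have h0 : ∀ v, h v = 0 := by
    intro v
    by_cases hv : lf G v
    · obtain ⟨u, hu, -⟩ := id hv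
      have h1 := hdiff v u hu
      rw [hY _ ⟨v, by simp, hv⟩, hnl u (fun hl => not_both G hT h3 hu hv hl)] at h1
      linarith
    · exact hnl v hv
  have hY0 : ∀ e, Y e = 0 := by
    rintro ⟨e, he⟩
    induction e with
    | _ a b =>
      have h1 := hdiff a b he
      rw [h0, h0] at h1
      have h2 := sg_sq G s(a, b) a
      have h3 : sg G s(a, b) a ≠ 0 := by
        intro h; rw [h] at h2; norm_num at h2
      have h4 : Y ⟨s(a, b), he⟩ * sg G s(a, b) a = 0 := by linarith
      exact (mul_eq_zero.1 h4).resolve_right h3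
  refine ⟨?_, ?_, hY0⟩
  · obtain ⟨v⟩ := (inferInstance : Nonempty V)
    have := hh v
    simp only [h0, hY0, zero_mul, Finset.sum_const_zero] at this
    linarith
  · rintro ⟨e, he⟩
    induction e with
    | _ a b =>
      have he' : G.Adj a b := he
      rw [← hq a b he, H' a b he'.ne, h0, h0]; norm_num

end main

section final
open Classical Matrix

/-- `sep` on unordered pairs -/
noncomputable def sepS (G : SimpleGraph V) (e : Sym2 V) : Sym2 V → ℝ :=
  Sym2.lift ⟨sep G e, sep_comm G e⟩

/-- `ssum` on unordered pairs -/
noncomputable def ssumS (G : SimpleGraph V) (e : Sym2 V) : Sym2 V → ℝ :=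
  Sym2.lift ⟨ssum G e, ssum_comm G e⟩

/-- total over pendant edges, shifted -/
noncomputable def cpS [Fintype V] (G : SimpleGraph V) (s : Sym2 V) : ℝ :=
  ∑ e : {e : G.edgeSet // pend G e.1}, sepS G e.1.1 s +
    (Fintype.card {e : G.edgeSet // ¬ pend G e.1} : ℝ) / 2

/-- positive part -/
noncomputable def Umat [Fintype V] (G : SimpleGraph V) :
    Matrix (Option {e : G.edgeSet // ¬ pend G e.1}) {s : Sym2 V // ¬ s.IsDiag} ℝ :=
  fun i s => match i with
    | none => cpS G s.1 + 1 / 2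
    | some e => sepS G e.1.1 s.1

/-- negative part -/
noncomputable def Wmat [Fintype V] (G : SimpleGraph V) :
    Matrix (Option {e : G.edgeSet // ¬ pend G e.1}) {s : Sym2 V // ¬ s.IsDiag} ℝ :=
  fun i s => match i with
    | none => cpS G s.1 - 1 / 2
    | some e => ssumS G e.1.1 s.1

lemma sum_split [Fintype V] (G : SimpleGraph V) (f : G.edgeSet → ℝ) :
    ∑ e, f e = ∑ e : {e : G.edgeSet // pend G e.1}, f e.1 +
      ∑ e : {e : G.edgeSet // ¬ pend G e.1}, f e.1 :=
  (Fintype.sum_subtype_add_sum_subtype (fun e : G.edgeSet => pend G e.1) f).symm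

lemma mat_eq [Fintype V] [DecidableEq V] (G : SimpleGraph V) (hT : G.IsTree) :
    max4MatrixR G = (Umat G)ᵀ * Umat G - (Wmat G)ᵀ * Wmat G := by
  ext ⟨s, hs⟩ ⟨t, ht⟩
  induction s with
  | _ w x =>
  induction t with
  | _ y z =>
  have h1 : w ≠ x := by simpa using hs
  have h2 : y ≠ z := by simpa using ht
  have h3 : max4MatrixR G ⟨s(w, x), hs⟩ ⟨s(y, z), ht⟩ = (max4 G w x y z : ℝ) := rfl
  rw [h3, max4_eq G hT, sum_split]
  rw [Finset.sum_congr rfl (fun e _ => pend_entry G hT e.1.1 e.1.2 e.2 h1 h2)]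
  simp only [Matrix.sub_apply, Matrix.mul_apply, Matrix.transpose_apply, Fintype.sum_option,
    Umat, Wmat, sepS, ssumS, cpS, Sym2.lift_mk, Finset.sum_add_distrib, Finset.sum_sub_distrib,
    Finset.sum_const, Finset.card_univ, nsmul_eq_mul]
  ring

lemma mat_indep [Fintype V] (G : SimpleGraph V) (hT : G.IsTree)
    (h3 : 3 ≤ Fintype.card V) (x y : Option {e : G.edgeSet // ¬ pend G e.1} → ℝ)
    (h : x ᵥ* Umat G + y ᵥ* Wmat G = 0) : x = 0 ∧ y = 0 := by
  have : Nontrivial V := Fintype.one_lt_card_iff_nontrivial.1 (by omega)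
  let X : G.edgeSet → ℝ := fun e => if he : pend G e.1 then x none + y none else x (some ⟨e, he⟩)
  let Y : G.edgeSet → ℝ := fun e => if he : pend G e.1 then 0 else y (some ⟨e, he⟩)
  have Xp : ∀ e : {e : G.edgeSet // pend G e.1}, X e.1 = x none + y none := fun e => dif_pos e.2
  have Xn : ∀ e : {e : G.edgeSet // ¬ pend G e.1}, X e.1 = x (some e) := fun e => dif_neg e.2
  have Yp : ∀ e : {e : G.edgeSet // pend G e.1}, Y e.1 = 0 := fun e => dif_pos e.2
  have Yn : ∀ e : {e : G.edgeSet // ¬ pend G e.1}, Y e.1 = y (some e) := fun e => dif_neg e.2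
  obtain ⟨hα, hX, hY⟩ := indep G hT h3
    ((x none + y none) * ((Fintype.card {e : G.edgeSet // ¬ pend G e.1} : ℝ) / 2)
      + (x none - y none) / 2) X Y (fun e he => dif_pos he) (by
    intro a b hab
    have h1 := congrFun h ⟨s(a, b), by simpa using hab⟩
    simp only [Pi.add_apply, Matrix.vecMul, dotProduct, Fintype.sum_option, Umat, Wmat, cpS, sepS,
      ssumS, Sym2.lift_mk, Pi.zero_apply] at h1
    rw [sum_split, sum_split]
    simp only [Xp, Xn, Yp, Yn, ← Finset.mul_sum, zero_mul, Finset.sum_const_zero]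
    linear_combination h1)
  obtain ⟨l, hl⟩ := hT.exists_vert_degree_one_of_nontrivial
  rw [degree_eq_one_iff_existsUnique_adj] at hl
  obtain ⟨u, hu, -⟩ := id hl
  have h4 := Xp ⟨⟨s(l, u), hu⟩, l, by simp, hl⟩
  rw [hX] at h4
  rw [← h4] at hα
  constructor
  · funext i
    rcases i with _ | e
    · simp only [Pi.zero_apply]; linarith
    · rw [← Xn, hX]; rfl
  · funext i
    rcases i with _ | e
    · simp only [Pi.zero_apply]; linarith
    · rw [← Yn, hY]; rfl

lemma card_index [Fintype V] (G : SimpleGraph V) (hT : G.IsTree)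
    (h3 : 3 ≤ Fintype.card V) :
    Fintype.card (Option {e : G.edgeSet // ¬ pend G e.1}) + Fintype.card {v // lf G v}
      = Fintype.card V := by
  rw [card_pend G hT h3, Fintype.card_option]
  have h1 := hT.card_edgeFinset
  rw [SimpleGraph.edgeFinset_card] at h1
  have h2 := Fintype.card_subtype_compl (fun e : G.edgeSet => pend G e.1)
  have h4 := Fintype.card_subtype_le (fun e : G.edgeSet => pend G e.1)
  omega

lemma inertia_pre [Fintype V] [DecidableEq V] (G : SimpleGraph V) (hT : G.IsTree)
    (h3 : 3 ≤ Fintype.card V) :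
    ∃ k, k + Fintype.card {v // lf G v} = Fintype.card V ∧
    ((max4MatrixR G).charpoly.roots.filter fun x => 0 < x).card = k ∧
    ((max4MatrixR G).charpoly.roots.filter fun x => x < 0).card = k ∧
    Multiset.count (0 : ℝ) (max4MatrixR G).charpoly.roots + 2 * k =
      Fintype.card {s : Sym2 V // ¬ s.IsDiag} := by
  refine ⟨Fintype.card (Option {e : G.edgeSet // ¬ pend G e.1}), card_index G hT h3, ?_⟩
  have := inertia_aux (max4MatrixR G) (Umat G) (Wmat G) (mat_eq G hT) (mat_indep G hT h3)
  convert this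

end final

/-- Inertia of `Max4PC_T`: for a tree `T` on `n ≥ 3` vertices with `p` pendant
vertices, the real symmetric matrix `Max4PC_T` has `n - p` positive eigenvalues,
`n - p` negative eigenvalues, and the eigenvalue `0` with multiplicity
`C(n,2) - 2(n-p)` (eigenvalues are the roots of the characteristic polynomial,
counted with multiplicity). -/
theorem inertia_max4Matrix {V : Type*} [Fintype V] [DecidableEq V]
    (G : SimpleGraph V) [DecidableRel G.Adj] (hT : G.IsTree) (n p : ℕ)
    (hn : Fintype.card V = n) (hn3 : 3 ≤ n)
    (hp : (Finset.univ.filter fun v : V => G.degree v = 1).card = p) :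
    (((max4MatrixR G).charpoly.roots.filter fun x => 0 < x).card = n - p) ∧
    (((max4MatrixR G).charpoly.roots.filter fun x => x < 0).card = n - p) ∧
    Multiset.count (0 : ℝ) (max4MatrixR G).charpoly.roots =
      Nat.choose n 2 - 2 * (n - p) := by
  classical
  subst hn
  obtain ⟨k, h5, h1, h2, h4⟩ := inertia_pre G hT hn3
  have h6 : Fintype.card {v // lf G v} = p := by
    rw [← hp, Fintype.card_subtype]
    apply congrArg Finset.card
    ext v
    simp only [Finset.mem_filter, Finset.mem_univ, true_and]
    rw [degree_eq_one_iff_existsUnique_adj]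
    rfl
  have h7 : Fintype.card {s : Sym2 V // ¬ s.IsDiag} = (Fintype.card V).choose 2 :=
    Sym2.card_subtype_not_diag
  rw [h7] at h4
  refine ⟨?_, ?_, ?_⟩
  · rw [h1]; omega
  · rw [h2]; omega
  · have : Fintype.card V - p = k := by omega
    rw [this, ← h4]
    omega
end
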